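/- arXiv:1203.3187 — 2 statements merged into one kernel-verified Lean document; each statement's English description precedes it below -/
import Mathlib

section
/- For every integer n ≥ 1 (with the convention Z_0(x,y) = 1), the two types of adjacent-boundary doubly-refined ASM generating function are related by: ((z1−1)(z2−1) − y·z1·z2)·Zadj_n(x,y;z1,z2) − (x(z1−1)(z2−1) − y)·z1·z2·Zbaradj_n(x,y;z1,z2) = (z1−1)(z2−1)·(1 − (x·z1·z2)^n)·Z_{n−1}(x,y), as an identity of polynomials in ℤ[x,y,z1,z2]. -/
open Finset

/-- The `n × n` integer matrix encoded by `e`, with entries in `{-1, 0, 1}`. -/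
def asmMat {n : ℕ} (e : Fin n → Fin n → Fin 3) : Fin n → Fin n → ℤ :=
  fun i j => (e i j : ℤ) - 1

/-- `A` is an alternating sign matrix: all entries lie in `{-1, 0, 1}`, every
partial row sum and every partial column sum is `0` or `1` (equivalently, the
nonzero entries of each row and of each column alternate in sign), and every
complete row sum and column sum is `1`. -/
def IsASM {n : ℕ} (A : Fin n → Fin n → ℤ) : Prop :=
  (∀ i j, A i j = -1 ∨ A i j = 0 ∨ A i j = 1) ∧
  (∀ (i j : Fin n), (∑ j' ∈ univ.filter (fun j' : Fin n => j' ≤ j), A i j') = 0 ∨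
    (∑ j' ∈ univ.filter (fun j' : Fin n => j' ≤ j), A i j') = 1) ∧
  (∀ (i j : Fin n), (∑ i' ∈ univ.filter (fun i' : Fin n => i' ≤ i), A i' j) = 0 ∨
    (∑ i' ∈ univ.filter (fun i' : Fin n => i' ≤ i), A i' j) = 1) ∧
  (∀ i : Fin n, (∑ j, A i j) = 1) ∧
  (∀ j : Fin n, (∑ i, A i j) = 1)

/-- `ν(A)`, the number of generalized inversions of `A`. -/
def nuASM {n : ℕ} (A : Fin n → Fin n → ℤ) : ℕ :=
  (∑ i : Fin n, ∑ i' : Fin n, ∑ j : Fin n, ∑ j' : Fin n,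
      if i < i' ∧ j' ≤ j then A i j * A i' j' else 0).toNat

/-- `μ(A)`, the number of entries of `A` equal to `-1`. -/
def muASM {n : ℕ} (A : Fin n → Fin n → ℤ) : ℕ :=
  (univ.filter (fun p : Fin n × Fin n => A p.1 p.2 = -1)).card

/-- `ρT(A)`, the number of `0`'s to the left of the `1` in the top row of `A`. -/
def rhoT {n : ℕ} (A : Fin n → Fin n → ℤ) : ℕ :=
  (univ.filter (fun j : Fin n =>
    A ⟨0, j.pos⟩ j = 0 ∧ ∃ j' : Fin n, j < j' ∧ A ⟨0, j.pos⟩ j' = 1)).card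

/-- `ρR(A)`, the number of `0`'s below the `1` in the right-most column of `A`. -/
def rhoR {n : ℕ} (A : Fin n → Fin n → ℤ) : ℕ :=
  (univ.filter (fun i : Fin n =>
    A i ⟨n - 1, Nat.sub_lt i.pos Nat.one_pos⟩ = 0 ∧
      ∃ i' : Fin n, i' < i ∧ A i' ⟨n - 1, Nat.sub_lt i.pos Nat.one_pos⟩ = 1)).card

/-- `ρB(A)`, the number of `0`'s to the right of the `1` in the bottom row of `A`. -/
def rhoB {n : ℕ} (A : Fin n → Fin n → ℤ) : ℕ :=
  (univ.filter (fun j : Fin n =>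
    A ⟨n - 1, Nat.sub_lt j.pos Nat.one_pos⟩ j = 0 ∧
      ∃ j' : Fin n, j' < j ∧ A ⟨n - 1, Nat.sub_lt j.pos Nat.one_pos⟩ j' = 1)).card

/-- `ρL(A)`, the number of `0`'s above the `1` in the left-most column of `A`. -/
def rhoL {n : ℕ} (A : Fin n → Fin n → ℤ) : ℕ :=
  (univ.filter (fun i : Fin n =>
    A i ⟨0, i.pos⟩ = 0 ∧ ∃ i' : Fin n, i < i' ∧ A i' ⟨0, i.pos⟩ = 1)).card

open Classical in
/-- The quadruply-refined ASM generating function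
`Zqua_n(x,y;z1,z2,z3,z4) = Σ_A x^{ν(A)} y^{μ(A)} z1^{ρT(A)} z2^{ρR(A)} z3^{ρB(A)} z4^{ρL(A)}`. -/
noncomputable def Zqua (n : ℕ) {R : Type*} [CommRing R] (x y z1 z2 z3 z4 : R) : R :=
  ∑ e : Fin n → Fin n → Fin 3,
    if IsASM (asmMat e) then
      x ^ nuASM (asmMat e) * y ^ muASM (asmMat e) * z1 ^ rhoT (asmMat e) *
        z2 ^ rhoR (asmMat e) * z3 ^ rhoB (asmMat e) * z4 ^ rhoL (asmMat e)
    else 0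

/-- Adjacent-boundary doubly-refined generating function `Zadj_n(x,y;z1,z2)`. -/
noncomputable def Zadj (n : ℕ) {R : Type*} [CommRing R] (x y z1 z2 : R) : R :=
  Zqua n x y z1 1 1 z2

/-- Alternative adjacent-boundary doubly-refined generating function `Zbaradj_n(x,y;z1,z2)`. -/
noncomputable def Zbaradj (n : ℕ) {R : Type*} [CommRing R] (x y z1 z2 : R) : R :=
  Zqua n x y z1 z2 1 1

/-- Triply-refined generating function `Ztri_n(x,y;z1,z2,z3)`. -/
noncomputable def Ztri (n : ℕ) {R : Type*} [CommRing R] (x y z1 z2 z3 : R) : R :=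
  Zqua n x y z1 1 z2 z3

/-- Opposite-boundary doubly-refined generating function `Zopp_n(x,y;z1,z2)`. -/
noncomputable def Zopp (n : ℕ) {R : Type*} [CommRing R] (x y z1 z2 : R) : R :=
  Zqua n x y z1 1 z2 1

/-- Singly-refined generating function `Z_n(x,y;z)`. -/
noncomputable def Zsing (n : ℕ) {R : Type*} [CommRing R] (x y z : R) : R :=
  Zqua n x y z 1 1 1

/-- Unrefined generating function `Z_n(x,y)`.  Note `Zun 0 x y = 1`. -/
noncomputable def Zun (n : ℕ) {R : Type*} [CommRing R] (x y : R) : R :=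
  Zqua n x y 1 1 1 1


/-- Splitting a sum over Boolean vectors according to their first coordinate. -/
theorem sum_boolVec_succ {M : Type*} [AddCommMonoid M] {m : ℕ} (f : (Fin (m + 1) → Bool) → M) :
    ∑ k, f k = ∑ c : Bool, ∑ k : Fin m → Bool, f (Fin.cons c k) := by
  rw [← Fintype.sum_prod_type']
  exact (Fintype.sum_equiv (Fin.consEquiv (fun _ : Fin (m + 1) => Bool)) _ _ (fun _ => rfl)).symm

/-- The six-vertex weight of a vertex with left, top, right and bottom edge states
`h`, `t`, `g`, `b`. -/
def vertexWeight {R : Type*} [Zero R] (a₁ a₂ b₁ b₂ c₁ c₂ : R) : Bool → Bool → Bool → Bool → R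
  | false, false, false, false => a₁
  | true, true, true, true => a₂
  | false, true, false, true => b₁
  | true, false, true, false => b₂
  | false, false, true, true => c₁
  | true, true, false, false => c₂
  | _, _, _, _ => 0

/-- The monodromy of a column with vertex weights `W`, left edge states `h` and right edge
states `g`, as a matrix indexed by the top and bottom edge states. -/
def columnMonodromy {R : Type*} [CommRing R] {m : ℕ} (W : Fin m → Bool → Bool → Bool → Bool → R)
    (h g : Fin m → Bool) : Matrix Bool Bool R :=
  (List.ofFn fun i => Matrix.of fun t b => W i (h i) t (g i) b).prod

/-- The domain-wall transfer matrix of a column: the top edge is `0` and the bottom edge `1`. -/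
def columnTransfer {R : Type*} [CommRing R] {m : ℕ} (W : Fin m → Bool → Bool → Bool → Bool → R) :
    Matrix (Fin m → Bool) (Fin m → Bool) R :=
  Matrix.of fun h g => columnMonodromy W h g false true

theorem columnMonodromy_cons {R : Type*} [CommRing R] {m : ℕ} (w : Bool → Bool → Bool → Bool → R)
    (W : Fin m → Bool → Bool → Bool → Bool → R) (h g : Fin (m + 1) → Bool) :
    columnMonodromy (Fin.cons w W : Fin (m + 1) → Bool → Bool → Bool → Bool → R) h g =
      (Matrix.of fun t b => w (h 0) t (g 0) b) * columnMonodromy W (Fin.tail h) (Fin.tail g) := by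
  simp [columnMonodromy, List.ofFn_succ, Fin.tail]

open scoped Kronecker in
/-- The monodromy of two adjacent columns. -/
def twoColumnMonodromy {R : Type*} [CommRing R] {m : ℕ}
    (W W' : Fin m → Bool → Bool → Bool → Bool → R) (h g : Fin m → Bool) :
    Matrix (Bool × Bool) (Bool × Bool) R :=
  ∑ k, columnMonodromy W h k ⊗ₖ columnMonodromy W' k g

open scoped Kronecker in
/-- Two horizontally adjacent vertices, as a matrix from top to bottom edge states. -/
def twoVertex {R : Type*} [CommRing R] (w w' : Bool → Bool → Bool → Bool → R) (h g : Bool) :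
    Matrix (Bool × Bool) (Bool × Bool) R :=
  ∑ k, (Matrix.of fun t b => w h t k b) ⊗ₖ (Matrix.of fun t b => w' k t g b)

theorem twoVertex_apply {R : Type*} [CommRing R] (w w' : Bool → Bool → Bool → Bool → R)
    (h g t s b d : Bool) :
    twoVertex w w' h g (t, s) (b, d) = ∑ k, w h t k b * w' k s g d := by
  rw [twoVertex, Matrix.sum_apply]
  rfl

theorem twoColumnMonodromy_cons {R : Type*} [CommRing R] {m : ℕ}
    (w w' : Bool → Bool → Bool → Bool → R) (W W' : Fin m → Bool → Bool → Bool → Bool → R)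
    (h g : Fin (m + 1) → Bool) :
    twoColumnMonodromy (Fin.cons w W : Fin (m + 1) → Bool → Bool → Bool → Bool → R)
        (Fin.cons w' W' : Fin (m + 1) → Bool → Bool → Bool → Bool → R) h g =
      twoVertex w w' (h 0) (g 0) * twoColumnMonodromy W W' (Fin.tail h) (Fin.tail g) := by
  simp only [twoColumnMonodromy, twoVertex, sum_boolVec_succ, columnMonodromy_cons,
    Fin.cons_zero, Fin.tail_cons, Matrix.mul_kronecker_mul, Finset.sum_mul_sum]

theorem columnTransfer_mul_apply {R : Type*} [CommRing R] {m : ℕ}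
    (W W' : Fin m → Bool → Bool → Bool → Bool → R) (h g : Fin m → Bool) :
    (columnTransfer W * columnTransfer W') h g =
      twoColumnMonodromy W W' h g (false, false) (true, true) := by
  simp [twoColumnMonodromy, columnTransfer, Matrix.mul_apply, Matrix.sum_apply]


/-- The intertwiner of two adjacent columns, acting on their vertical edge states. -/
def crossing {R : Type*} [Zero R] (a p q r s : R) : Matrix (Bool × Bool) (Bool × Bool) R
  | (false, false), (false, false) => a
  | (true, true), (true, true) => a
  | (false, true), (false, true) => p
  | (true, false), (true, false) => q
  | (false, true), (true, false) => r
  | (true, false), (false, true) => s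
  | _, _ => 0

section YangBaxter

variable {R : Type*} [CommRing R] (x y z₁ z₂ : R)

/-- The vertex weights counting generalized inversions and entries `-1`. -/
def bulkWeight : Bool → Bool → Bool → Bool → R := vertexWeight 1 x 1 1 1 y

/-- The vertex weights of the bulk rows in the refined column. -/
def refinedWeight : Bool → Bool → Bool → Bool → R :=
  vertexWeight z₂ (x * z₂) 1 1 1 ((1 - z₂) * (1 - x * z₂) + y * z₂)

/-- The intertwiner exchanging a refined column with a bulk column. -/
def columnCrossing : Matrix (Bool × Bool) (Bool × Bool) R :=
  crossing (y + x * (z₂ - 1)) ((1 - z₂) * (1 - x * z₂) + y * z₂) y (x * (z₂ - 1)) (z₂ - 1)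

/-- The vertex weights of the top row, where every top edge is `0`, with independent weights
`α`, `β`, `γ` for the three possible vertices. -/
def topWeight (α β γ : R) : Bool → Bool → Bool → Bool → R := vertexWeight α 0 0 β γ 0

theorem columnCrossing_mul_twoVertex (h g : Bool) :
    columnCrossing x y z₂ * twoVertex (refinedWeight x y z₂) (bulkWeight x y) h g =
      twoVertex (bulkWeight x y) (refinedWeight x y z₂) h g * columnCrossing x y z₂ := by
  ext ⟨t, s⟩ ⟨b, d⟩
  cases h <;> cases g <;> cases t <;> cases s <;> cases b <;> cases d <;>
    simp only [Matrix.mul_apply, Fintype.sum_prod_type, Fintype.sum_bool, twoVertex_apply,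
      columnCrossing, crossing, refinedWeight, bulkWeight, vertexWeight] <;> ring

/-- The exchange relation in the top row holds only for vanishing top edges. -/
theorem columnCrossing_mul_twoVertex_top (h g : Bool) (p : Bool × Bool) :
    (columnCrossing x y z₂ * twoVertex
        (topWeight ((z₁ - 1) * (z₂ - 1) - y * z₁ * z₂) (x * (z₁ - 1) * (z₂ - 1) - y) (-y))
        (topWeight z₁ 1 1) h g) (false, false) p =
      (twoVertex (topWeight z₁ 1 1)
        (topWeight ((z₁ - 1) * (z₂ - 1) - y * z₁ * z₂) (x * (z₁ - 1) * (z₂ - 1) - y) (-y)) h g *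
          columnCrossing x y z₂) (false, false) p := by
  obtain ⟨b, d⟩ := p
  cases h <;> cases g <;> cases b <;> cases d <;>
    simp only [Matrix.mul_apply, Fintype.sum_prod_type, Fintype.sum_bool, twoVertex_apply,
      columnCrossing, crossing, topWeight, vertexWeight] <;> ring

theorem columnCrossing_mul_twoColumnMonodromy {m : ℕ} (h g : Fin m → Bool) :
    columnCrossing x y z₂ *
        twoColumnMonodromy (fun _ => refinedWeight x y z₂) (fun _ => bulkWeight x y) h g =
      twoColumnMonodromy (fun _ => bulkWeight x y) (fun _ => refinedWeight x y z₂) h g *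
        columnCrossing x y z₂ := by
  induction m with
  | zero => simp [twoColumnMonodromy, columnMonodromy]
  | succ m ih =>
    have cons_const (w : Bool → Bool → Bool → Bool → R) :
        (fun _ : Fin (m + 1) => w) = Fin.cons w (fun _ => w) := by
      funext i; cases i using Fin.cases <;> rfl
    rw [cons_const, cons_const, twoColumnMonodromy_cons, twoColumnMonodromy_cons, ← mul_assoc,
      columnCrossing_mul_twoVertex, mul_assoc, ih, mul_assoc]

/-- A column with bulk weights below a top row of parameter `z₁`. -/
def bulkColumn (m : ℕ) : Matrix (Fin (m + 1) → Bool) (Fin (m + 1) → Bool) R :=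
  columnTransfer (Fin.cons (topWeight z₁ 1 1) fun _ : Fin m => bulkWeight x y)

/-- A column with refined weights of parameter `z₂` below a top vertex of weights
`α`, `β`, `γ`. -/
def refinedColumn (m : ℕ) (α β γ : R) : Matrix (Fin (m + 1) → Bool) (Fin (m + 1) → Bool) R :=
  columnTransfer (Fin.cons (topWeight α β γ) fun _ : Fin m => refinedWeight x y z₂)

theorem smul_refinedColumn_mul_bulkColumn (m : ℕ) :
    (y + x * (z₂ - 1)) • (refinedColumn x y z₂ m ((z₁ - 1) * (z₂ - 1) - y * z₁ * z₂)
        (x * (z₁ - 1) * (z₂ - 1) - y) (-y) * bulkColumn x y z₁ m) =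
      (y + x * (z₂ - 1)) • (bulkColumn x y z₁ m * refinedColumn x y z₂ m
        ((z₁ - 1) * (z₂ - 1) - y * z₁ * z₂) (x * (z₁ - 1) * (z₂ - 1) - y) (-y)) := by
  ext h g
  rw [Matrix.smul_apply, Matrix.smul_apply, refinedColumn, bulkColumn, columnTransfer_mul_apply,
    columnTransfer_mul_apply]
  set w := topWeight ((z₁ - 1) * (z₂ - 1) - y * z₁ * z₂) (x * (z₁ - 1) * (z₂ - 1) - y) (-y)
  have crossing_mul (M : Matrix (Bool × Bool) (Bool × Bool) R) :
      (columnCrossing x y z₂ * M) (false, false) (true, true) =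
        (y + x * (z₂ - 1)) • M (false, false) (true, true) := by
    simp [Matrix.mul_apply, Fintype.sum_prod_type, columnCrossing, crossing]
  have mul_crossing (M : Matrix (Bool × Bool) (Bool × Bool) R) :
      (M * columnCrossing x y z₂) (false, false) (true, true) =
        (y + x * (z₂ - 1)) • M (false, false) (true, true) := by
    simp [Matrix.mul_apply, Fintype.sum_prod_type, columnCrossing, crossing, mul_comm]
  rw [← crossing_mul, ← mul_crossing, twoColumnMonodromy_cons, twoColumnMonodromy_cons,
    mul_assoc, ← columnCrossing_mul_twoColumnMonodromy, ← mul_assoc, ← mul_assoc,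
    Matrix.mul_apply, Matrix.mul_apply]
  simp only [w, columnCrossing_mul_twoVertex_top]

end YangBaxter

theorem map_columnMonodromy {R S : Type*} [CommRing R] [CommRing S] (φ : R →+* S) {m : ℕ}
    (W : Fin m → Bool → Bool → Bool → Bool → R) (h g : Fin m → Bool) :
    (columnMonodromy W h g).map φ = columnMonodromy (fun i h t g b => φ (W i h t g b)) h g := by
  rw [columnMonodromy, columnMonodromy, ← RingHom.mapMatrix_apply, map_list_prod, List.map_ofFn]
  rfl

theorem map_columnTransfer {R S : Type*} [CommRing R] [CommRing S] (φ : R →+* S) {m : ℕ}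
    (W : Fin m → Bool → Bool → Bool → Bool → R) :
    (columnTransfer W).map φ = columnTransfer (fun i h t g b => φ (W i h t g b)) := by
  ext h g
  simp [columnTransfer, ← map_columnMonodromy]

theorem map_vertexWeight {R S : Type*} [CommRing R] [CommRing S] (φ : R →+* S)
    (a₁ a₂ b₁ b₂ c₁ c₂ : R) (h t g b : Bool) :
    φ (vertexWeight a₁ a₂ b₁ b₂ c₁ c₂ h t g b) =
      vertexWeight (φ a₁) (φ a₂) (φ b₁) (φ b₂) (φ c₁) (φ c₂) h t g b := by
  cases h <;> cases t <;> cases g <;> cases b <;> simp [vertexWeight]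

theorem map_bulkColumn {R S : Type*} [CommRing R] [CommRing S] (φ : R →+* S) (x y z₁ : R)
    (m : ℕ) : (bulkColumn x y z₁ m).map φ = bulkColumn (φ x) (φ y) (φ z₁) m := by
  rw [bulkColumn, map_columnTransfer, bulkColumn]
  congr 1
  funext i h t g b
  cases i using Fin.cases <;> simp [topWeight, bulkWeight, map_vertexWeight]

theorem map_refinedColumn {R S : Type*} [CommRing R] [CommRing S] (φ : R →+* S)
    (x y z₂ α β γ : R) (m : ℕ) :
    (refinedColumn x y z₂ m α β γ).map φ =
      refinedColumn (φ x) (φ y) (φ z₂) m (φ α) (φ β) (φ γ) := by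
  rw [refinedColumn, map_columnTransfer, refinedColumn]
  congr 1
  funext i h t g b
  cases i using Fin.cases <;> simp [topWeight, refinedWeight, map_vertexWeight]

open Polynomial in
/-- The refined column commutes with the bulk columns. -/
theorem commute_refinedColumn_bulkColumn {R : Type*} [CommRing R] (x y z₁ z₂ : R) (m : ℕ) :
    Commute (refinedColumn x y z₂ m ((z₁ - 1) * (z₂ - 1) - y * z₁ * z₂)
      (x * (z₁ - 1) * (z₂ - 1) - y) (-y)) (bulkColumn x y z₁ m) := by
  have key := smul_refinedColumn_mul_bulkColumn (C x) (X : R[X]) (C z₁) (C z₂) m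
  have reg : IsRegular (X + C x * (C z₂ - 1) : R[X]) := by
    rw [← C_1, ← C_sub, ← C_mul]
    exact (monic_X_add_C _).isRegular
  have cancel {M N : Matrix (Fin (m + 1) → Bool) (Fin (m + 1) → Bool) R[X]}
      (h : (X + C x * (C z₂ - 1) : R[X]) • M = (X + C x * (C z₂ - 1) : R[X]) • N) : M = N := by
    ext1 u v
    exact reg.left (congrFun (congrFun h u) v)
  have := congrArg (evalRingHom y).mapMatrix (cancel key)
  rw [map_mul, map_mul, RingHom.mapMatrix_apply, RingHom.mapMatrix_apply, map_bulkColumn,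
    map_refinedColumn] at this
  simpa [commute_iff_eq, -X_mul_C] using this

theorem cons_bool_const {m : ℕ} (c : Bool) :
    (fun _ : Fin (m + 1) => c) = Fin.cons c (fun _ : Fin m => c) := by
  funext i
  cases i using Fin.cases <;> rfl

section SpecialEntries

variable {R : Type*} [CommRing R] (x y z₁ z₂ : R)

/-- The column transfer matrix with bulk weights only. -/
def pureColumn (m : ℕ) : Matrix (Fin m → Bool) (Fin m → Bool) R :=
  columnTransfer fun _ => bulkWeight x y

theorem columnTransfer_cons_apply {m : ℕ} (w : Bool → Bool → Bool → Bool → R)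
    (W : Fin m → Bool → Bool → Bool → Bool → R) (c d : Bool) (h g : Fin m → Bool) :
    columnTransfer (Fin.cons w W : Fin (m + 1) → Bool → Bool → Bool → Bool → R)
        (Fin.cons c h) (Fin.cons d g) =
      w c false d true * columnMonodromy W h g true true +
        w c false d false * columnTransfer W h g := by
  simp [columnTransfer, columnMonodromy_cons, Matrix.mul_apply]

theorem columnMonodromy_refinedWeight_left {m : ℕ} (g : Fin m → Bool) :
    columnMonodromy (fun _ => refinedWeight x y z₂) (fun _ => false) g true true =
      if g = fun _ => false then 1 else 0 := by
  induction m with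
  | zero => simp [columnMonodromy, eq_iff_true_of_subsingleton]
  | succ m ih =>
    have cons_const : (fun _ : Fin (m + 1) => refinedWeight x y z₂) =
        Fin.cons (refinedWeight x y z₂) (fun _ => refinedWeight x y z₂) := by
      funext i; cases i using Fin.cases <;> rfl
    cases g using Fin.consCases with
    | _ d g =>
      rw [cons_const, columnMonodromy_cons, cons_bool_const, Matrix.mul_apply, Fin.tail_cons,
        Fin.tail_cons, Fintype.sum_bool, ih]
      cases d <;> simp [Fin.cons_inj, refinedWeight, vertexWeight]

theorem columnMonodromy_refinedWeight_right {m : ℕ} (h : Fin m → Bool) :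
    columnMonodromy (fun _ => refinedWeight x y z₂) h (fun _ => true) true true =
      if h = fun _ => true then (x * z₂) ^ m else 0 := by
  induction m with
  | zero => simp [columnMonodromy, eq_iff_true_of_subsingleton]
  | succ m ih =>
    have cons_const : (fun _ : Fin (m + 1) => refinedWeight x y z₂) =
        Fin.cons (refinedWeight x y z₂) (fun _ => refinedWeight x y z₂) := by
      funext i; cases i using Fin.cases <;> rfl
    cases h using Fin.consCases with
    | _ d h =>
      rw [cons_const, columnMonodromy_cons, cons_bool_const, Matrix.mul_apply, Fin.tail_cons,
        Fin.tail_cons, Fintype.sum_bool, ih]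
      cases d <;> simp [Fin.cons_inj, refinedWeight, vertexWeight, pow_succ']

theorem bulkColumn_cons_apply {m : ℕ} (c d : Bool) (h g : Fin m → Bool) :
    bulkColumn x y z₁ m (Fin.cons c h) (Fin.cons d g) =
      topWeight z₁ 1 1 c false d true *
          columnMonodromy (fun _ => bulkWeight x y) h g true true +
        topWeight z₁ 1 1 c false d false * pureColumn x y m h g :=
  columnTransfer_cons_apply _ _ c d h g

theorem bulkColumn_pow_true {m : ℕ} (k : ℕ) (h g : Fin m → Bool) :
    (bulkColumn x y z₁ m ^ k) (Fin.cons true h) (Fin.cons true g) = (pureColumn x y m ^ k) h g := by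
  induction k generalizing h with
  | zero => simp [Matrix.one_apply]
  | succ k ih =>
    rw [pow_succ', pow_succ', Matrix.mul_apply, Matrix.mul_apply, sum_boolVec_succ]
    simp [ih, bulkColumn_cons_apply, topWeight, vertexWeight]

theorem bulkColumn_pow_false {m : ℕ} (k : ℕ) (h g : Fin m → Bool) :
    (bulkColumn x y z₁ m ^ k) (Fin.cons false h) (Fin.cons false g) =
      z₁ ^ k * (pureColumn x y m ^ k) h g := by
  induction k generalizing g with
  | zero => simp [Matrix.one_apply]
  | succ k ih =>
    rw [pow_succ, pow_succ (pureColumn x y m), Matrix.mul_apply, Matrix.mul_apply,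
      sum_boolVec_succ]
    simp only [Fintype.sum_bool, ih, bulkColumn_cons_apply, topWeight, vertexWeight, mul_sum]
    simp only [zero_mul, add_zero, mul_zero, sum_const_zero, zero_add]
    exact sum_congr rfl fun _ _ => by ring

theorem refinedColumn_eq_add (m : ℕ) (α β γ : R) :
    refinedColumn x y z₂ m α β γ = α • refinedColumn x y z₂ m 1 0 0 +
      β • refinedColumn x y z₂ m 0 1 0 + γ • refinedColumn x y z₂ m 0 0 1 := by
  ext h g
  cases h using Fin.consCases with
  | _ c h =>
  cases g using Fin.consCases with
  | _ d g =>
  simp only [refinedColumn, Matrix.add_apply, Matrix.smul_apply, columnTransfer_cons_apply]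
  cases c <;> cases d <;> simp [topWeight, vertexWeight]

theorem refinedColumn_mul_apply (m k : ℕ) (α β γ : R) :
    (refinedColumn x y z₂ m α β γ * bulkColumn x y z₁ m ^ k)
        (fun _ => false) (fun _ => true) =
      α * (refinedColumn x y z₂ m 1 0 0 * bulkColumn x y z₁ m ^ k)
          (fun _ => false) (fun _ => true) +
        γ * (pureColumn x y m ^ k) (fun _ => false) (fun _ => true) := by
  have left_β : (refinedColumn x y z₂ m 0 1 0 * bulkColumn x y z₁ m ^ k)
      (fun _ => false) (fun _ => true) = 0 := by
    rw [Matrix.mul_apply, sum_boolVec_succ, cons_bool_const]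
    simp [refinedColumn, columnTransfer_cons_apply, topWeight, vertexWeight]
  have left_γ : (refinedColumn x y z₂ m 0 0 1 * bulkColumn x y z₁ m ^ k)
      (fun _ => false) (fun _ => true) =
        (pureColumn x y m ^ k) (fun _ => false) (fun _ => true) := by
    rw [Matrix.mul_apply, sum_boolVec_succ, cons_bool_const, cons_bool_const]
    simp [refinedColumn, columnTransfer_cons_apply, topWeight, vertexWeight,
      columnMonodromy_refinedWeight_left, bulkColumn_pow_true]
  rw [refinedColumn_eq_add, add_mul, add_mul, smul_mul_assoc, smul_mul_assoc, smul_mul_assoc]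
  simp [left_β, left_γ]

theorem mul_refinedColumn_apply (m k : ℕ) (α β γ : R) :
    (bulkColumn x y z₁ m ^ k * refinedColumn x y z₂ m α β γ)
        (fun _ => false) (fun _ => true) =
      β * (bulkColumn x y z₁ m ^ k * refinedColumn x y z₂ m 0 1 0)
          (fun _ => false) (fun _ => true) +
        γ * (z₁ ^ k * (x * z₂) ^ m *
          (pureColumn x y m ^ k) (fun _ => false) (fun _ => true)) := by
  have right_α : (bulkColumn x y z₁ m ^ k * refinedColumn x y z₂ m 1 0 0)
      (fun _ => false) (fun _ => true) = 0 := by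
    rw [Matrix.mul_apply, sum_boolVec_succ, cons_bool_const, cons_bool_const]
    simp [refinedColumn, columnTransfer_cons_apply, topWeight, vertexWeight]
  have right_γ : (bulkColumn x y z₁ m ^ k * refinedColumn x y z₂ m 0 0 1)
      (fun _ => false) (fun _ => true) =
        z₁ ^ k * (x * z₂) ^ m * (pureColumn x y m ^ k) (fun _ => false) (fun _ => true) := by
    rw [Matrix.mul_apply, sum_boolVec_succ, cons_bool_const, cons_bool_const]
    simp only [Fintype.sum_bool, refinedColumn, columnTransfer_cons_apply, topWeight,
      vertexWeight, columnMonodromy_refinedWeight_right, bulkColumn_pow_false]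
    simp
    ring
  rw [refinedColumn_eq_add, mul_add, mul_add, mul_smul_comm, mul_smul_comm, mul_smul_comm]
  simp [right_α, right_γ]

end SpecialEntries

theorem list_prod_apply {S R : Type*} [Fintype S] [DecidableEq S] [CommRing R] {k : ℕ}
    (M : Fin k → Matrix S S R) (a b : S) :
    (List.ofFn M).prod a b = ∑ p : Fin (k + 1) → S,
      if p 0 = a ∧ p (Fin.last k) = b then ∏ j : Fin k, M j (p j.castSucc) (p j.succ) else 0 := by
  induction k generalizing a with
  | zero =>
    rw [← (Equiv.funUnique (Fin 1) S).symm.sum_comp]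
    simp [Matrix.one_apply, ite_and, Equiv.funUnique, uniqueElim]
  | succ k ih =>
    rw [List.ofFn_succ, List.prod_cons, Matrix.mul_apply,
      ← (Fin.consEquiv fun _ : Fin (k + 2) => S).sum_comp, Fintype.sum_prod_type]
    simp only [ih, Fin.consEquiv_apply, Fin.cons_zero, ← Fin.succ_last, Fin.cons_succ,
      Fin.prod_univ_succ, Fin.castSucc_zero, ← Fin.succ_castSucc, mul_sum]
    simp only [ite_and]
    rw [sum_comm, sum_comm (s := univ (α := S))]
    refine sum_congr rfl fun p _ => ?_
    simp

theorem prod_columnTransfer_apply {R : Type*} [CommRing R] {m n : ℕ}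
    (W : Fin n → Fin m → Bool → Bool → Bool → Bool → R) (a b : Fin m → Bool) :
    (List.ofFn fun j => columnTransfer (W j)).prod a b =
      ∑ s : (Fin (n + 1) → Fin m → Bool) × (Fin n → Fin (m + 1) → Bool),
        if (s.1 0 = a ∧ s.1 (Fin.last n) = b) ∧
            ∀ j, s.2 j 0 = false ∧ s.2 j (Fin.last m) = true then
          ∏ j : Fin n, ∏ i : Fin m, W j i (s.1 j.castSucc i) (s.2 j i.castSucc)
            (s.1 j.succ i) (s.2 j i.succ)
        else 0 := by
  rw [list_prod_apply, Fintype.sum_prod_type]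
  refine sum_congr rfl fun p _ => ?_
  by_cases hp : p 0 = a ∧ p (Fin.last n) = b
  · simp only [hp, and_self, if_true, true_and]
    simp only [columnTransfer, columnMonodromy, Matrix.of_apply, list_prod_apply]
    rw [Finset.prod_univ_sum, Fintype.piFinset_univ]
    refine sum_congr rfl fun v _ => ?_
    rw [Finset.prod_ite_zero]
    simp
  · simp [hp]

/-- The sum of the first `k` entries of `f`. -/
def partialSum {n : ℕ} (f : Fin n → ℤ) (k : ℕ) : ℤ :=
  ∑ j ∈ univ.filter (fun j : Fin n => (j : ℕ) < k), f j

theorem partialSum_zero {n : ℕ} (f : Fin n → ℤ) : partialSum f 0 = 0 := by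
  simp [partialSum]

theorem partialSum_succ {n : ℕ} (f : Fin n → ℤ) (j : Fin n) :
    partialSum f (j + 1) = partialSum f j + f j := by
  have : univ.filter (fun i : Fin n => (i : ℕ) < j + 1) =
      insert j (univ.filter fun i : Fin n => (i : ℕ) < j) := by
    ext i
    simp only [mem_filter, mem_univ, true_and, mem_insert, Fin.ext_iff]
    omega
  rw [partialSum, this, sum_insert (by simp), add_comm, partialSum]

theorem partialSum_eq_sum {n : ℕ} (f : Fin n → ℤ) : partialSum f n = ∑ j, f j := by
  simp [partialSum]

theorem sum_filter_le_eq_partialSum {n : ℕ} (f : Fin n → ℤ) (j : Fin n) :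
    ∑ i ∈ univ.filter (fun i : Fin n => i ≤ j), f i = partialSum f (j + 1) := by
  simp only [partialSum, Nat.lt_succ_iff, Fin.le_def]

theorem partialSum_eq_of_telescope {n : ℕ} (f : Fin n → ℤ) (s : Fin (n + 1) → ℤ) (h₀ : s 0 = 0)
    (hs : ∀ j : Fin n, s j.succ = s j.castSucc + f j) (k : Fin (n + 1)) :
    partialSum f k = s k := by
  induction k using Fin.induction with
  | zero => simp [partialSum_zero, h₀]
  | succ k ih => rw [hs, ← ih, Fin.val_succ, partialSum_succ, Fin.val_castSucc]

/-- A matrix is an alternating sign matrix iff its partial row and column sums are `0` or `1`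
and its complete row and column sums are `1`. -/
theorem isASM_iff {n : ℕ} (A : Fin n → Fin n → ℤ) :
    IsASM A ↔
      (∀ (i : Fin n) (k : Fin (n + 1)), partialSum (A i) k = 0 ∨ partialSum (A i) k = 1) ∧
      (∀ (j : Fin n) (k : Fin (n + 1)),
        partialSum (fun i => A i j) k = 0 ∨ partialSum (fun i => A i j) k = 1) ∧
      (∀ i : Fin n, partialSum (A i) n = 1) ∧
      (∀ j : Fin n, partialSum (fun i => A i j) n = 1) := by
  simp only [IsASM, sum_filter_le_eq_partialSum, partialSum_eq_sum]
  constructor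
  · rintro ⟨-, hr, hc, hrt, hct⟩
    refine ⟨fun i k => ?_, fun j k => ?_, hrt, hct⟩
    · cases k using Fin.cases with
      | zero => exact Or.inl (partialSum_zero _)
      | succ k => exact hr i k
    · cases k using Fin.cases with
      | zero => exact Or.inl (partialSum_zero _)
      | succ k => exact hc k j
  · rintro ⟨hr, hc, hrt, hct⟩
    refine ⟨fun i j => ?_, fun i j => hr i j.succ, fun i j => hc j i.succ, hrt, hct⟩
    have h₁ := hr i j.castSucc
    have h₂ := hr i j.succ
    rw [Fin.val_succ, partialSum_succ] at h₂
    rw [Fin.val_castSucc] at h₁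
    omega

/-- The horizontal edge states of a matrix, column by column. -/
def rowState {n : ℕ} (A : Fin n → Fin n → ℤ) (k : Fin (n + 1)) (i : Fin n) : Bool :=
  decide (partialSum (A i) k = 1)

/-- The vertical edge states of a matrix, column by column. -/
def colState {n : ℕ} (A : Fin n → Fin n → ℤ) (j : Fin n) (k : Fin (n + 1)) : Bool :=
  decide (partialSum (fun i => A i j) k = 1)

theorem toInt_decide_eq_one {a : ℤ} (ha : a = 0 ∨ a = 1) : (decide (a = 1)).toInt = a := by
  rcases ha with rfl | rfl <;> rfl

theorem toInt_injective {a b : Bool} (h : a.toInt = b.toInt) : a = b := by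
  cases a <;> cases b <;> simp_all [Bool.toInt]

section ASMStates

variable {n : ℕ} {A : Fin n → Fin n → ℤ}

theorem IsASM.toInt_rowState (hA : IsASM A) (k : Fin (n + 1)) (i : Fin n) :
    (rowState A k i).toInt = partialSum (A i) k :=
  toInt_decide_eq_one (((isASM_iff A).1 hA).1 i k)

theorem IsASM.toInt_colState (hA : IsASM A) (j : Fin n) (k : Fin (n + 1)) :
    (colState A j k).toInt = partialSum (fun i => A i j) k :=
  toInt_decide_eq_one (((isASM_iff A).1 hA).2.1 j k)

theorem IsASM.entry_eq_rowState (hA : IsASM A) (i j : Fin n) :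
    A i j = (rowState A j.succ i).toInt - (rowState A j.castSucc i).toInt := by
  rw [hA.toInt_rowState, hA.toInt_rowState, Fin.val_succ, partialSum_succ, Fin.val_castSucc]
  ring

theorem IsASM.entry_eq_colState (hA : IsASM A) (i j : Fin n) :
    A i j = (colState A j i.succ).toInt - (colState A j i.castSucc).toInt := by
  rw [hA.toInt_colState, hA.toInt_colState, Fin.val_succ,
    partialSum_succ (fun i => A i j), Fin.val_castSucc]
  ring

theorem rowState_zero (A : Fin n → Fin n → ℤ) : rowState A 0 = fun _ => false := by
  funext i; simp [rowState, partialSum_zero]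

theorem IsASM.rowState_last (hA : IsASM A) : rowState A (Fin.last n) = fun _ => true := by
  funext i; simp [rowState, ((isASM_iff A).1 hA).2.2.1 i]

theorem colState_zero (A : Fin n → Fin n → ℤ) (j : Fin n) : colState A j 0 = false := by
  simp [colState, partialSum_zero]

theorem IsASM.colState_last (hA : IsASM A) (j : Fin n) : colState A j (Fin.last n) = true := by
  simp [colState, ((isASM_iff A).1 hA).2.2.2 j]

end ASMStates

theorem asmMat_injective {n : ℕ} : Function.Injective (asmMat (n := n)) := by
  intro e e' h
  funext i j
  have := congrFun (congrFun h i) j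
  simp only [asmMat] at this
  ext
  omega

theorem exists_asmMat_eq {n : ℕ} (A : Fin n → Fin n → ℤ)
    (hA : ∀ i j, A i j = -1 ∨ A i j = 0 ∨ A i j = 1) :
    ∃ e, asmMat e = A := by
  refine ⟨fun i j => ⟨(A i j + 1).toNat, by have := hA i j; omega⟩, ?_⟩
  funext i j
  have := hA i j
  simp only [asmMat]
  omega

open Classical in
/-- A product of column transfer matrices between the domain-wall boundary states is a sum over
alternating sign matrices. -/
theorem prod_columnTransfer_eq_sum_asm {R : Type*} [CommRing R] {n : ℕ}
    (W : Fin n → Fin n → Bool → Bool → Bool → Bool → R)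
    (hW : ∀ j i h t g b, W j i h t g b ≠ 0 → g.toInt - h.toInt = b.toInt - t.toInt) :
    (List.ofFn fun j => columnTransfer (W j)).prod (fun _ => false) (fun _ => true) =
      ∑ e : Fin n → Fin n → Fin 3, if IsASM (asmMat e) then
        ∏ j : Fin n, ∏ i : Fin n, W j i (rowState (asmMat e) j.castSucc i)
          (colState (asmMat e) j i.castSucc) (rowState (asmMat e) j.succ i)
          (colState (asmMat e) j i.succ)
      else 0 := by
  rw [prod_columnTransfer_apply, ← sum_filter, ← sum_filter]
  symm
  refine sum_of_injOn (fun e => (rowState (asmMat e), colState (asmMat e))) ?_ ?_ ?_ ?_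
  · intro e he e' he' h
    simp only [coe_filter, mem_univ, true_and, Set.mem_ofPred_eq] at he he'
    apply asmMat_injective
    funext i j
    have hrow : rowState (asmMat e) = rowState (asmMat e') := congrArg Prod.fst h
    rw [he.entry_eq_rowState, he'.entry_eq_rowState, hrow]
  · intro e he
    simp only [coe_filter, mem_univ, true_and, Set.mem_ofPred_eq] at he ⊢
    exact ⟨⟨rowState_zero _, he.rowState_last⟩,
      fun j => ⟨colState_zero _ j, he.colState_last j⟩⟩
  · rintro ⟨p, v⟩ hs hne
    simp only [mem_filter, mem_univ, true_and] at hs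
    obtain ⟨⟨hp₀, hp₁⟩, hv⟩ := hs
    by_contra hprod
    apply hne
    have ice (j i : Fin n) : (p j.succ i).toInt - (p j.castSucc i).toInt =
        (v j i.succ).toInt - (v j i.castSucc).toInt :=
      hW j i _ _ _ _ fun h0 => hprod (prod_eq_zero (mem_univ j) (prod_eq_zero (mem_univ i) h0))
    set A : Fin n → Fin n → ℤ := fun i j => (p j.succ i).toInt - (p j.castSucc i).toInt with hAdef
    have hrow (i : Fin n) (k : Fin (n + 1)) : partialSum (A i) k = (p k i).toInt := by
      refine partialSum_eq_of_telescope (A i) (fun k => (p k i).toInt) ?_ ?_ k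
      · simp [hp₀]
      · intro j; simp only [A]; ring
    have hcol (j : Fin n) (k : Fin (n + 1)) :
        partialSum (fun i => A i j) k = (v j k).toInt := by
      refine partialSum_eq_of_telescope _ (fun k => (v j k).toInt) ?_ ?_ k
      · simp [hv]
      · intro i; simp only [A, ice]; ring
    have toInt_cases (b : Bool) : b.toInt = 0 ∨ b.toInt = 1 := by cases b <;> simp
    have hA : IsASM A := by
      refine (isASM_iff A).2 ⟨fun i k => ?_, fun j k => ?_, fun i => ?_, fun j => ?_⟩
      · rw [hrow]; exact toInt_cases _
      · rw [hcol]; exact toInt_cases _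
      · simpa [hp₁] using hrow i (Fin.last n)
      · simpa [hv] using hcol j (Fin.last n)
    obtain ⟨e, he⟩ := exists_asmMat_eq A hA.1
    refine ⟨e, by simpa [he] using hA, ?_⟩
    simp only [he]
    refine Prod.ext ?_ ?_
    · funext k i
      exact toInt_injective (by rw [hA.toInt_rowState, hrow])
    · funext j k
      exact toInt_injective (by rw [hA.toInt_colState, hcol])
  · intro e _
    rfl

section Statistics

variable {n : ℕ} {A : Fin n → Fin n → ℤ}

theorem sum_inversions_eq (A : Fin n → Fin n → ℤ) :
    (∑ i : Fin n, ∑ i' : Fin n, ∑ j : Fin n, ∑ j' : Fin n,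
      if i < i' ∧ j' ≤ j then A i j * A i' j' else 0) =
    ∑ j : Fin n, ∑ i : Fin n,
      partialSum (fun i' => A i' j) i * partialSum (A i) (j + 1) := by
  rw [sum_comm, sum_comm (s := univ (α := Fin n)) (t := univ (α := Fin n))
    (f := fun j i => partialSum (fun i' => A i' j) i * partialSum (A i) (j + 1))]
  refine sum_congr rfl fun i' _ => ?_
  rw [sum_comm]
  refine sum_congr rfl fun j _ => ?_
  rw [← sum_filter_le_eq_partialSum, partialSum, sum_mul_sum]
  simp only [← Fin.lt_def, sum_filter, ite_and]
  refine sum_congr rfl fun i _ => ?_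
  split_ifs <;> simp

theorem IsASM.nuASM_eq (hA : IsASM A) :
    nuASM A = ∑ j : Fin n, ∑ i : Fin n,
      if colState A j i.castSucc = true ∧ rowState A j.succ i = true then 1 else 0 := by
  rw [nuASM, sum_inversions_eq]
  refine (congrArg Int.toNat ?_).trans (Int.toNat_natCast _)
  push_cast
  refine sum_congr rfl fun j _ => sum_congr rfl fun i _ => ?_
  have h₁ := hA.toInt_rowState j.succ i
  have h₂ := hA.toInt_colState j i.castSucc
  rw [Fin.val_succ] at h₁
  rw [Fin.val_castSucc] at h₂
  rw [← h₁, ← h₂]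
  cases rowState A j.succ i <;> cases colState A j i.castSucc <;> simp

theorem IsASM.muASM_eq (hA : IsASM A) :
    muASM A = ∑ j : Fin n, ∑ i : Fin n,
      if rowState A j.castSucc i = true ∧ rowState A j.succ i = false then 1 else 0 := by
  rw [muASM, card_filter, Fintype.sum_prod_type, sum_comm]
  refine sum_congr rfl fun j _ => sum_congr rfl fun i _ => ?_
  simp only [hA.entry_eq_rowState i j]
  cases rowState A j.succ i <;> cases rowState A j.castSucc i <;> simp

theorem partialSum_mono {f : Fin n → ℤ} (hf : ∀ i, 0 ≤ f i) {k l : ℕ} (h : k ≤ l) :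
    partialSum f k ≤ partialSum f l :=
  sum_le_sum_of_subset_of_nonneg
    (fun i hi => by simp only [mem_filter, mem_univ, true_and] at hi ⊢; omega) fun i _ _ => hf i

theorem exists_pos_of_partialSum_lt {f : Fin n → ℤ} (hf : ∀ i, 0 ≤ f i) {k l : ℕ} (hkl : k ≤ l)
    (h : partialSum f k < partialSum f l) : ∃ i : Fin n, k ≤ i ∧ (i : ℕ) < l ∧ 0 < f i := by
  by_contra! hcon
  refine h.ne (sum_subset (fun i hi => ?_) fun i hi hi' => ?_)
  · simp only [mem_filter, mem_univ, true_and] at hi ⊢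
    omega
  · simp only [mem_filter, mem_univ, true_and, not_lt] at hi hi'
    exact le_antisymm (hcon i hi' hi) (hf i)

/-- In a nonnegative line of sum `1`, the zeros before the `1` are the positions up to which the
partial sum vanishes. -/
theorem zero_before_one_iff {f : Fin n → ℤ} (hf : ∀ i, 0 ≤ f i) (hsum : partialSum f n = 1)
    (j : Fin n) : (f j = 0 ∧ ∃ j', j < j' ∧ f j' = 1) ↔ partialSum f (j + 1) = 0 := by
  have nonneg (k : ℕ) : 0 ≤ partialSum f k := sum_nonneg fun i _ => hf i
  constructor
  · rintro ⟨-, j', hj, hj'⟩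
    have h₁ := partialSum_mono hf (Nat.succ_le_of_lt (Fin.lt_def.1 hj))
    have h₂ := partialSum_mono hf (Nat.succ_le_of_lt j'.isLt)
    have h₃ := partialSum_succ f j'
    have := nonneg (j + 1)
    simp only [Nat.succ_eq_add_one] at h₁ h₂
    omega
  · intro h
    have h₁ := partialSum_succ f j
    have h₂ := nonneg j
    refine ⟨by linarith [hf j], ?_⟩
    obtain ⟨j', hj, -, hpos⟩ := exists_pos_of_partialSum_lt hf (Nat.succ_le_of_lt j.isLt)
      (by rw [hsum, Nat.succ_eq_add_one, h]; exact one_pos)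
    have h₃ := partialSum_mono hf (Nat.succ_le_of_lt j'.isLt)
    rw [Nat.succ_eq_add_one, partialSum_succ] at h₃
    have h₄ := nonneg j'
    exact ⟨j', hj, by omega⟩

/-- In a nonnegative line of sum `1`, the zeros after the `1` are the positions before which the
partial sum is `1`. -/
theorem zero_after_one_iff {f : Fin n → ℤ} (hf : ∀ i, 0 ≤ f i) (hsum : partialSum f n = 1)
    (j : Fin n) : (f j = 0 ∧ ∃ j', j' < j ∧ f j' = 1) ↔ partialSum f j = 1 := by
  have nonneg (k : ℕ) : 0 ≤ partialSum f k := sum_nonneg fun i _ => hf i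
  have le_one {k : ℕ} (hk : k ≤ n) : partialSum f k ≤ 1 := hsum ▸ partialSum_mono hf hk
  constructor
  · rintro ⟨-, j', hj, hj'⟩
    have h₁ := partialSum_mono hf (Nat.succ_le_of_lt (Fin.lt_def.1 hj))
    rw [Nat.succ_eq_add_one, partialSum_succ] at h₁
    have := nonneg j'
    have := le_one j.isLt.le
    omega
  · intro h
    have h₁ := partialSum_succ f j
    have h₂ := le_one (Nat.succ_le_of_lt j.isLt)
    refine ⟨by have := hf j; simp only [Nat.succ_eq_add_one] at h₂; omega, ?_⟩
    obtain ⟨j', -, hj, hpos⟩ := exists_pos_of_partialSum_lt hf (Nat.zero_le j)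
      (by rw [h, partialSum_zero]; exact one_pos)
    have h₃ := le_one (Nat.succ_le_of_lt j'.isLt)
    rw [Nat.succ_eq_add_one, partialSum_succ] at h₃
    have h₄ := nonneg j'
    exact ⟨j', hj, by omega⟩

theorem IsASM.rhoT_eq (hA : IsASM A) :
    rhoT A = ∑ j : Fin n, ∑ i : Fin n,
      if (i : ℕ) = 0 ∧ rowState A j.succ i = false then 1 else 0 := by
  rw [rhoT, card_filter]
  refine sum_congr rfl fun j _ => ?_
  rw [sum_eq_single ⟨0, j.pos⟩ (by simp [Fin.ext_iff]; tauto) (by simp)]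
  have nonneg (k : Fin n) : 0 ≤ A ⟨0, j.pos⟩ k := by
    rw [hA.entry_eq_colState]
    have : (⟨0, j.pos⟩ : Fin n).castSucc = 0 := rfl
    rw [this, colState_zero]
    cases colState A k (Fin.succ ⟨0, j.pos⟩) <;> simp
  refine if_congr ?_ rfl rfl
  rw [zero_before_one_iff nonneg (((isASM_iff A).1 hA).2.2.1 _) j]
  have := hA.toInt_rowState j.succ ⟨0, j.pos⟩
  rw [Fin.val_succ] at this
  rw [← this]
  cases rowState A j.succ ⟨0, j.pos⟩ <;> simp

theorem IsASM.rhoL_eq (hA : IsASM A) :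
    rhoL A = ∑ j : Fin n, ∑ i : Fin n,
      if (j : ℕ) = 0 ∧ colState A j i.succ = false then 1 else 0 := by
  rw [rhoL, card_filter, sum_comm]
  refine sum_congr rfl fun i _ => ?_
  rw [sum_eq_single ⟨0, i.pos⟩ (by simp [Fin.ext_iff]; tauto) (by simp)]
  have nonneg (k : Fin n) : 0 ≤ A k ⟨0, i.pos⟩ := by
    rw [hA.entry_eq_rowState]
    have : (⟨0, i.pos⟩ : Fin n).castSucc = 0 := rfl
    rw [this, rowState_zero]
    cases rowState A (Fin.succ ⟨0, i.pos⟩) k <;> simp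
  refine if_congr ?_ rfl rfl
  rw [zero_before_one_iff nonneg (((isASM_iff A).1 hA).2.2.2 _) i]
  have := hA.toInt_colState ⟨0, i.pos⟩ i.succ
  rw [Fin.val_succ] at this
  rw [← this]
  cases colState A ⟨0, i.pos⟩ i.succ <;> simp

theorem IsASM.rhoR_eq (hA : IsASM A) :
    rhoR A = ∑ j : Fin n, ∑ i : Fin n,
      if (j : ℕ) + 1 = n ∧ colState A j i.castSucc = true then 1 else 0 := by
  rw [rhoR, card_filter, sum_comm]
  refine sum_congr rfl fun i _ => ?_
  have last_lt : n - 1 < n := Nat.sub_lt i.pos Nat.one_pos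
  have last_add : n - 1 + 1 = n := Nat.sub_add_cancel i.pos
  rw [sum_eq_single ⟨n - 1, last_lt⟩ (fun j _ hj => if_neg fun h => hj (Fin.ext (by simp; omega)))
    (by simp)]
  have nonneg (k : Fin n) : 0 ≤ A k ⟨n - 1, last_lt⟩ := by
    rw [hA.entry_eq_rowState]
    have : (⟨n - 1, last_lt⟩ : Fin n).succ = Fin.last n := Fin.ext (by simpa using last_add)
    rw [this, hA.rowState_last]
    cases rowState A (Fin.castSucc ⟨n - 1, last_lt⟩) k <;> simp
  refine if_congr ?_ rfl rfl
  rw [zero_after_one_iff nonneg (((isASM_iff A).1 hA).2.2.2 _) i]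
  have := hA.toInt_colState ⟨n - 1, last_lt⟩ i.castSucc
  rw [Fin.val_castSucc] at this
  rw [← this]
  cases colState A ⟨n - 1, last_lt⟩ i.castSucc <;> simp [last_add]

end Statistics

/-- A product of column transfer matrices whose vertex weights match the statistics on top, right
and left boundaries is the refined generating function. -/
theorem prod_columnTransfer_eq_Zqua {R : Type*} [CommRing R] {n : ℕ} (x y z₁ z₂ z₄ : R)
    (W : Fin n → Fin n → Bool → Bool → Bool → Bool → R)
    (hice : ∀ j i h t g b, W j i h t g b ≠ 0 → g.toInt - h.toInt = b.toInt - t.toInt)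
    (hW : ∀ (j i : Fin n) (h t g b : Bool), g.toInt - h.toInt = b.toInt - t.toInt →
      ((i : ℕ) = 0 → t = false) → ((j : ℕ) = 0 → h = false) → ((j : ℕ) + 1 = n → g = true) →
      W j i h t g b = x ^ (if t = true ∧ g = true then 1 else 0) *
        y ^ (if h = true ∧ g = false then 1 else 0) *
        z₁ ^ (if (i : ℕ) = 0 ∧ g = false then 1 else 0) *
        z₂ ^ (if (j : ℕ) + 1 = n ∧ t = true then 1 else 0) *
        z₄ ^ (if (j : ℕ) = 0 ∧ b = false then 1 else 0)) :
    (List.ofFn fun j => columnTransfer (W j)).prod (fun _ => false) (fun _ => true) =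
      Zqua n x y z₁ z₂ 1 z₄ := by
  rw [prod_columnTransfer_eq_sum_asm W hice, Zqua]
  refine sum_congr rfl fun e _ => ?_
  split_ifs with hA
  swap
  · rfl
  rw [hA.nuASM_eq, hA.muASM_eq, hA.rhoT_eq, hA.rhoR_eq, hA.rhoL_eq, one_pow, mul_one]
  simp only [← prod_pow_eq_pow_sum, ← prod_mul_distrib]
  refine prod_congr rfl fun j _ => prod_congr rfl fun i _ => hW j i _ _ _ _ ?_ ?_ ?_ ?_
  · rw [← hA.entry_eq_rowState, ← hA.entry_eq_colState]
  · intro hi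
    have : i.castSucc = 0 := Fin.ext hi
    rw [this, colState_zero]
  · intro hj
    have : j.castSucc = 0 := Fin.ext hj
    rw [this, rowState_zero]
  · intro hj
    have : j.succ = Fin.last n := Fin.ext hj
    rw [this, hA.rowState_last]

theorem vertexWeight_ice {R : Type*} [Zero R] {a₁ a₂ b₁ b₂ c₁ c₂ : R} {h t g b : Bool}
    (hne : vertexWeight a₁ a₂ b₁ b₂ c₁ c₂ h t g b ≠ 0) :
    g.toInt - h.toInt = b.toInt - t.toInt := by
  cases h <;> cases t <;> cases g <;> cases b <;> simp_all [vertexWeight]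

section GeneratingFunctions

variable {R : Type*} [CommRing R] (x y z₁ z₂ : R)

theorem pureColumn_pow_eq_Zun (n : ℕ) :
    (pureColumn x y n ^ n) (fun _ => false) (fun _ => true) = Zun n x y := by
  rw [Zun, ← prod_columnTransfer_eq_Zqua x y 1 1 1 (fun _ _ => bulkWeight x y)
    (fun _ _ _ _ _ _ => vertexWeight_ice), List.ofFn_const, List.prod_replicate, pureColumn]
  intro j i h t g b
  cases h <;> cases t <;> cases g <;> cases b <;> simp [bulkWeight, vertexWeight]

theorem refinedColumn_mul_eq_Zadj (m : ℕ) :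
    (refinedColumn x y z₂ m (z₁ * z₂) 1 1 * bulkColumn x y z₁ m ^ m)
      (fun _ => false) (fun _ => true) = Zadj (m + 1) x y z₁ z₂ := by
  rw [Zadj, ← prod_columnTransfer_eq_Zqua x y z₁ 1 z₂
    (Fin.cons (Fin.cons (topWeight (z₁ * z₂) 1 1) fun _ : Fin m => refinedWeight x y z₂)
      fun _ : Fin m => Fin.cons (topWeight z₁ 1 1) fun _ : Fin m => bulkWeight x y)]
  · simp [List.ofFn_succ, refinedColumn, bulkColumn]
  · intro j i h t g b
    cases j using Fin.cases <;> cases i using Fin.cases <;> exact vertexWeight_ice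
  · intro j i h t g b
    cases j using Fin.cases <;> cases i using Fin.cases <;> cases h <;> cases t <;> cases g <;>
      cases b <;> simp [topWeight, refinedWeight, bulkWeight, vertexWeight]

theorem mul_refinedColumn_eq_Zbaradj (m : ℕ) :
    (bulkColumn x y z₁ m ^ m * refinedColumn x y z₂ m 1 1 1)
      (fun _ => false) (fun _ => true) = Zbaradj (m + 1) x y z₁ z₂ := by
  rw [Zbaradj, ← prod_columnTransfer_eq_Zqua x y z₁ z₂ 1
    (Fin.snoc (fun _ : Fin m => Fin.cons (topWeight z₁ 1 1) fun _ : Fin m => bulkWeight x y)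
      (Fin.cons (topWeight 1 1 1) fun _ : Fin m => refinedWeight x y z₂))]
  · simp [-List.ofFn_succ, List.ofFn_succ', refinedColumn, bulkColumn]
  · intro j i h t g b
    cases j using Fin.lastCases <;> cases i using Fin.cases <;>
      simp only [Fin.snoc_last, Fin.snoc_castSucc] <;> exact vertexWeight_ice
  · intro j i h t g b
    cases j using Fin.lastCases with
    | last =>
      cases i using Fin.cases <;> cases h <;> cases t <;> cases g <;> cases b <;>
        simp [topWeight, refinedWeight, vertexWeight]
    | cast j =>
      have := j.isLt.ne
      cases i using Fin.cases <;> cases h <;> cases t <;> cases g <;> cases b <;>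
        simp [topWeight, bulkWeight, vertexWeight, this]

end GeneratingFunctions

/-- Relation between the two types of adjacent-boundary doubly-refined ASM
generating function, stated for all values of the variables in any commutative
ring, equivalently as an identity of polynomials in `ℤ[x,y,z1,z2]` (the
convention `Z_0(x,y) = 1` holds definitionally: `Zun 0 x y = 1`). -/
theorem stmt7 {R : Type*} [CommRing R] (x y z1 z2 : R) (n : ℕ) (hn : 1 ≤ n) :
    ((z1 - 1) * (z2 - 1) - y * z1 * z2) * Zadj n x y z1 z2
      - (x * (z1 - 1) * (z2 - 1) - y) * z1 * z2 * Zbaradj n x y z1 z2 =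
    (z1 - 1) * (z2 - 1) * (1 - (x * z1 * z2) ^ n) * Zun (n - 1) x y := by
  obtain ⟨m, rfl⟩ := Nat.exists_eq_add_of_le' hn
  have comm := congrFun (congrFun
    ((commute_refinedColumn_bulkColumn x y z1 z2 m).pow_right m).eq (fun _ => false)) (fun _ => true)
  rw [refinedColumn_mul_apply, mul_refinedColumn_apply] at comm
  rw [← refinedColumn_mul_eq_Zadj, ← mul_refinedColumn_eq_Zbaradj, refinedColumn_mul_apply,
    mul_refinedColumn_apply, Nat.add_sub_cancel, ← pureColumn_pow_eq_Zun]
  linear_combination z1 * z2 * comm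
end

section
/- For every integer n ≥ 3, the quadruply-refined ASM generating function with bulk parameters related by y = x+1 satisfies the quadratic relation: Zqua_n(x,x+1;z1,z2,z3,z4)·Z_{n−2}(x,x+1) = Zadj_{n−1}(x,x+1;z4,z1)·Zadj_{n−1}(x,x+1;z2,z3) + x·z1·z2·z3·z4·Zbaradj_{n−1}(x,x+1;z1,z2)·Zbaradj_{n−1}(x,x+1;z3,z4), as an identity of polynomials in ℤ[x,z1,z2,z3,z4]. -/
open Finset

/-! ### Height functions of alternating sign matrices -/

/-- Height functions (corner sums) of the alternating sign matrices of size `n`, extended to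
`ℕ × ℕ` by the identity matrix. -/
structure IsHeight (n : ℕ) (H : ℕ → ℕ → ℤ) : Prop where
  eq_min : ∀ i j, i = 0 ∨ j = 0 ∨ n ≤ i ∨ n ≤ j → H i j = min (i : ℤ) j
  row : ∀ i j, H i j ≤ H (i + 1) j ∧ H (i + 1) j ≤ H i j + 1
  col : ∀ i j, H i j ≤ H i (j + 1) ∧ H i (j + 1) ≤ H i j + 1

theorem IsHeight.bounds {n : ℕ} {H : ℕ → ℕ → ℤ} (h : IsHeight n H) (i j : ℕ) :
    0 ≤ H i j ∧ H i j ≤ i := by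
  induction i with
  | zero => rw [h.eq_min 0 j (Or.inl rfl)]; simp
  | succ i ih => have := h.row i j; push_cast; omega

theorem finite_isHeight (n : ℕ) : {H | IsHeight n H}.Finite := by
  refine (Set.finite_range (fun (g : Fin n → Fin n → Fin (n + 1)) (i j : ℕ) =>
    if h : i < n ∧ j < n then ((g ⟨i, h.1⟩ ⟨j, h.2⟩ : ℕ) : ℤ) else min (i : ℤ) j)).subset ?_
  intro H hH
  refine ⟨fun i j => ⟨(H i j).toNat, ?_⟩, ?_⟩
  · have := IsHeight.bounds hH i j
    omega
  · funext i j
    by_cases h : i < n ∧ j < n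
    · have := IsHeight.bounds hH i j
      simp only [h, and_self, dite_true]
      omega
    · simp only [h, dite_false]
      rw [IsHeight.eq_min hH i j (by omega)]

/-- The finite set of height functions of size `n`. -/
noncomputable def heights (n : ℕ) : Finset (ℕ → ℕ → ℤ) := (finite_isHeight n).toFinset

@[simp]
theorem mem_heights {n : ℕ} {H : ℕ → ℕ → ℤ} : H ∈ heights n ↔ IsHeight n H := by
  simp [heights]

/-- The matrix entry recovered from a height function. -/
def entry (H : ℕ → ℕ → ℤ) (i j : ℕ) : ℤ := H (i + 1) (j + 1) - H i (j + 1) - H (i + 1) j + H i j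

/-- Compatibility of a height function `B` with a height function `A` of one size more. -/
def Interlaced (B A : ℕ → ℕ → ℤ) : Prop :=
  ∀ i j, A i j ≤ B i j ∧ A (i + 1) (j + 1) ≤ B i j + 1 ∧ B i j ≤ A (i + 1) j ∧ B i j ≤ A i (j + 1)

/-- Translation by `(1, 1)`. -/
def shift (X : ℕ → ℕ → ℤ) : ℕ → ℕ → ℤ
  | 0, _ => 0
  | _ + 1, 0 => 0
  | i + 1, j + 1 => X i j

/-- The indicator function of a set of cells. -/
def cellInd (s : Finset (ℕ × ℕ)) (i j : ℕ) : ℤ := if (i, j) ∈ s then 1 else 0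

/-- The cells of the `n × n` window where the entry of `A` is `c`. -/
def cells (n : ℕ) (c : ℤ) (A : ℕ → ℕ → ℤ) : Finset (ℕ × ℕ) :=
  (range n ×ˢ range n).filter fun p => entry A p.1 p.2 = c

theorem mem_cells {n : ℕ} {c : ℤ} {A : ℕ → ℕ → ℤ} {i j : ℕ} :
    (i, j) ∈ cells n c A ↔ (i < n ∧ j < n) ∧ entry A i j = c := by
  simp [cells]

/-- The largest height function above `A`. -/
def maxAbove (A : ℕ → ℕ → ℤ) : ℕ → ℕ → ℤ
  | 0, _ => 0
  | _ + 1, 0 => 0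
  | i + 1, j + 1 => min (A (i + 1) (j + 1)) (A i j + 1)

/-- The smallest height function below `A`. -/
def minBelow (A : ℕ → ℕ → ℤ) (i j : ℕ) : ℤ := max (A i j) (A (i + 1) (j + 1) - 1)

theorem add_shift_eq {n : ℕ} {A : ℕ → ℕ → ℤ} (hA : IsHeight n A) :
    A + shift A = maxAbove A + shift (minBelow A) := by
  funext i j
  rcases i with _ | i
  · simp [shift, maxAbove, hA.eq_min 0 j (Or.inl rfl)]
  rcases j with _ | j
  · simp only [Pi.add_apply, shift, maxAbove, hA.eq_min (i + 1) 0 (by simp)]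
    simp only [Nat.cast_zero]
    omega
  · simp only [Pi.add_apply, shift, maxAbove, minBelow]
    omega

theorem isHeight_above {n : ℕ} {A : ℕ → ℕ → ℤ} (hA : IsHeight n A) {s : Finset (ℕ × ℕ)}
    (hs : s ⊆ cells n 1 A) :
    IsHeight (n + 1) (maxAbove A - shift (cellInd s)) ∧
      Interlaced A (maxAbove A - shift (cellInd s)) := by
  set C := maxAbove A - shift (cellInd s) with hC
  have hz : ∀ i j, i = 0 ∨ j = 0 → C i j = 0 := by
    rintro (_ | i) (_ | j) h <;> (simp [C, shift, maxAbove]; try omega)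
  have hs' : ∀ i j, C (i + 1) (j + 1) = min (A (i + 1) (j + 1)) (A i j + 1) ∨
      (i < n ∧ j < n ∧ entry A i j = 1 ∧
        C (i + 1) (j + 1) = min (A (i + 1) (j + 1)) (A i j + 1) - 1) := by
    intro i j
    by_cases h : (i, j) ∈ s
    · have := mem_cells.1 (hs h)
      right
      refine ⟨this.1.1, this.1.2, this.2, ?_⟩
      simp [C, shift, maxAbove, cellInd, h]
    · left
      simp [C, shift, maxAbove, cellInd, h]
  have hI : Interlaced A C := by
    have hb := hA.bounds
    have hl : ∀ i j, A i j ≤ C (i + 1) j := by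
      rintro i (_ | j)
      · rw [hz _ _ (Or.inr rfl), hA.eq_min i 0 (by simp)]; simp
      · have h1 := hA.row i j
        have h2 := hA.row i (j + 1)
        have h3 := hA.col i j
        have h4 := hA.col (i + 1) j
        have h5 := hs' i j
        simp only [entry] at h5
        omega
    have hu : ∀ i j, A i j ≤ C i (j + 1) := by
      rintro (_ | i) j
      · rw [hz _ _ (Or.inl rfl), hA.eq_min 0 j (by simp)]; simp
      · have h1 := hA.row i j
        have h2 := hA.row i (j + 1)
        have h3 := hA.col i j
        have h4 := hA.col (i + 1) j
        have h5 := hs' i j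
        simp only [entry] at h5
        omega
    intro i j
    refine ⟨?_, ?_, hl i j, hu i j⟩
    · rcases i with _ | i
      · rw [hz _ _ (Or.inl rfl)]; exact (hb _ _).1
      rcases j with _ | j
      · rw [hz _ _ (Or.inr rfl)]; exact (hb _ _).1
      have h5 := hs' i j
      omega
    · have h5 := hs' i j
      omega
  refine ⟨⟨?_, ?_, ?_⟩, hI⟩
  · rintro (_ | i) (_ | j) h
    · simp [hz]
    · rw [hz _ _ (Or.inl rfl)]; push_cast; omega
    · rw [hz _ _ (Or.inr rfl)]; push_cast; omega
    · have h1 := hA.eq_min (i + 1) (j + 1) (by omega)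
      have h2 := hA.eq_min i j (by omega)
      have h5 := hs' i j
      push_cast at h1 ⊢
      omega
  · rintro i (_ | j)
    · simp [hz]
    · have h1 := hI i (j + 1)
      have h2 := hI i j
      omega
  · rintro (_ | i) j
    · simp [hz]
    · have h1 := hI (i + 1) j
      have h2 := hI i j
      omega

theorem isHeight_below {m : ℕ} {A : ℕ → ℕ → ℤ} (hA : IsHeight (m + 1) A) {s : Finset (ℕ × ℕ)}
    (hs : s ⊆ cells (m + 1) (-1) A) :
    IsHeight m (minBelow A + cellInd s) ∧ Interlaced (minBelow A + cellInd s) A := by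
  set B := minBelow A + cellInd s with hB
  have hs' : ∀ i j, B i j = max (A i j) (A (i + 1) (j + 1) - 1) ∨
      (i < m + 1 ∧ j < m + 1 ∧ entry A i j = -1 ∧
        B i j = max (A i j) (A (i + 1) (j + 1) - 1) + 1) := by
    intro i j
    by_cases h : (i, j) ∈ s
    · have := mem_cells.1 (hs h)
      right
      refine ⟨this.1.1, this.1.2, this.2, ?_⟩
      simp [B, minBelow, cellInd, h]
    · left
      simp [B, minBelow, cellInd, h]
  have hI : Interlaced B A := by
    intro i j
    have h1 := hA.row i j
    have h2 := hA.row i (j + 1)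
    have h3 := hA.col i j
    have h4 := hA.col (i + 1) j
    have h5 := hs' i j
    simp only [entry] at h5
    omega
  refine ⟨⟨?_, ?_, ?_⟩, hI⟩
  · intro i j h
    have h1 := hI i j
    have h2 := hA.eq_min (i + 1) j
    have h3 := hA.eq_min i (j + 1)
    have h4 := hA.eq_min (i + 1) (j + 1)
    have h5 := hA.eq_min i j
    push_cast at *
    rcases h with h | h | h | h
    · rw [h3 (by omega)] at h1; rw [h5 (by omega)] at h1; omega
    · rw [h2 (by omega)] at h1; rw [h5 (by omega)] at h1; omega
    · rw [h2 (by omega), h4 (by omega)] at h1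
      have := hA.col i j
      omega
    · rw [h3 (by omega), h4 (by omega)] at h1
      omega
  · intro i j
    have h1 := hI i j
    have h2 := hI (i + 1) j
    omega
  · intro i j
    have h1 := hI i j
    have h2 := hI i (j + 1)
    omega

open Classical in
theorem sum_above {M : Type*} [AddCommMonoid M] {n : ℕ} {A : ℕ → ℕ → ℤ} (hA : IsHeight n A)
    (G : (ℕ → ℕ → ℤ) → M) :
    ∑ C ∈ (heights (n + 1)).filter (fun C => Interlaced A C), G C =
      ∑ s ∈ (cells n 1 A).powerset, G (maxAbove A - shift (cellInd s)) := by
  symm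
  refine sum_bij' (fun s _ => maxAbove A - shift (cellInd s))
    (fun C _ => (cells n 1 A).filter fun p => C (p.1 + 1) (p.2 + 1) ≠ maxAbove A (p.1 + 1) (p.2 + 1))
    ?_ ?_ ?_ ?_ ?_
  · intro s hs
    have := isHeight_above hA (mem_powerset.1 hs)
    simp [this]
  · intro C _
    simp
  · intro s hs
    ext ⟨i, j⟩
    have hm : (i, j) ∈ s → (i, j) ∈ _ := fun h => mem_powerset.1 hs h
    by_cases h : (i, j) ∈ s
    · simp [shift, cellInd, h, hm h]
    · simp [shift, cellInd, h]
  · intro C hC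
    simp only [mem_filter, mem_heights] at hC
    obtain ⟨hC, hI⟩ := hC
    funext i j
    rcases i with _ | i
    · simp [shift, maxAbove, hC.eq_min 0 j (by simp)]
    rcases j with _ | j
    · simp only [Pi.sub_apply, shift, maxAbove, hC.eq_min (i + 1) 0 (by simp)]
      simp only [Nat.cast_zero]
      omega
    simp only [Pi.sub_apply, shift, cellInd]
    have h1 := hA.row i j
    have h2 := hA.row i (j + 1)
    have h3 := hA.col i j
    have h4 := hA.col (i + 1) j
    have h5 := hI i j
    have h6 := hI (i + 1) (j + 1)
    have h7 := hI (i + 1) j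
    have h8 := hI i (j + 1)
    by_cases hw : i < n ∧ j < n
    · split_ifs with hm <;> (rw [mem_filter, mem_cells] at hm) <;>
        simp only [hw, and_self, true_and, entry, maxAbove] at hm ⊢ <;> omega
    · have h9 := hC.eq_min (i + 1) (j + 1) (by omega)
      have h10 := hA.eq_min (i + 1) (j + 1) (by omega)
      have h11 := hA.eq_min i j (by omega)
      rw [if_neg (by rw [mem_filter, mem_cells]; tauto), maxAbove]
      push_cast at *
      omega
  · intros; rfl

open Classical in
theorem sum_below {M : Type*} [AddCommMonoid M] {m : ℕ} {A : ℕ → ℕ → ℤ} (hA : IsHeight (m + 1) A)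
    (G : (ℕ → ℕ → ℤ) → M) :
    ∑ B ∈ (heights m).filter (fun B => Interlaced B A), G B =
      ∑ s ∈ (cells (m + 1) (-1) A).powerset, G (minBelow A + cellInd s) := by
  symm
  refine sum_bij' (fun s _ => minBelow A + cellInd s)
    (fun B _ => (cells (m + 1) (-1) A).filter fun p => B p.1 p.2 ≠ minBelow A p.1 p.2)
    ?_ ?_ ?_ ?_ ?_
  · intro s hs
    have := isHeight_below hA (mem_powerset.1 hs)
    simp [this]
  · intro C _
    simp
  · intro s hs
    ext ⟨i, j⟩
    have hm : (i, j) ∈ s → (i, j) ∈ _ := fun h => mem_powerset.1 hs h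
    by_cases h : (i, j) ∈ s
    · simp [cellInd, h, hm h]
    · simp [cellInd, h]
  · intro B hB
    simp only [mem_filter, mem_heights] at hB
    obtain ⟨hB, hI⟩ := hB
    funext i j
    simp only [Pi.add_apply, cellInd]
    have h1 := hA.row i j
    have h2 := hA.row i (j + 1)
    have h3 := hA.col i j
    have h4 := hA.col (i + 1) j
    have h5 := hI i j
    by_cases hw : i < m + 1 ∧ j < m + 1
    · split_ifs with hm <;> (rw [mem_filter, mem_cells] at hm) <;>
        simp only [hw, and_self, true_and, entry, minBelow] at hm ⊢ <;> omega
    · have h9 := hB.eq_min i j (by omega)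
      have h10 := hA.eq_min (i + 1) (j + 1) (by omega)
      have h11 := hA.eq_min i j (by omega)
      rw [if_neg (by rw [mem_filter, mem_cells]; tauto), minBelow]
      push_cast at *
      omega
  · intros; rfl

/-! ### Weights of height functions -/

/-- The monomial attached to the matrix with height function `X`. -/
def weight {K : Type*} [Field K] (n : ℕ) (a : ℕ → ℕ → K) (X : ℕ → ℕ → ℤ) : K :=
  ∏ i ∈ range n, ∏ j ∈ range n, a i j ^ entry X i j

/-- The cross ratio of the `2 × 2` block at a cell. -/
def crossRatio {K : Type*} [Field K] (a : ℕ → ℕ → K) (p : ℕ × ℕ) : K :=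
  a p.1 p.2 * a (p.1 + 1) (p.2 + 1) / (a (p.1 + 1) p.2 * a p.1 (p.2 + 1))

/-- The exponent of `λ` in the weight of an interlaced pair. -/
def tightCount (m : ℕ) (B A : ℕ → ℕ → ℤ) : ℕ :=
  ((range m ×ˢ range m).filter fun p => B p.1 p.2 = A (p.1 + 1) (p.2 + 1)).card

/-- The number of cells around which the height function is constant. -/
def flatCount (n : ℕ) (A : ℕ → ℕ → ℤ) : ℕ := tightCount n A A

section Weight

variable {K : Type*} [Field K]

theorem weight_add {a : ℕ → ℕ → K} (ha : ∀ i j, a i j ≠ 0) (n : ℕ) (X Y : ℕ → ℕ → ℤ) :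
    weight n a (X + Y) = weight n a X * weight n a Y := by
  simp only [weight, ← prod_mul_distrib]
  refine prod_congr rfl fun i _ => prod_congr rfl fun j _ => ?_
  rw [← zpow_add₀ (ha i j)]
  congr 1
  simp only [entry, Pi.add_apply]
  ring

theorem weight_ne_zero {a : ℕ → ℕ → K} (ha : ∀ i j, a i j ≠ 0) (n : ℕ) (X : ℕ → ℕ → ℤ) :
    weight n a X ≠ 0 :=
  prod_ne_zero_iff.2 fun i _ => prod_ne_zero_iff.2 fun j _ => zpow_ne_zero _ (ha i j)

theorem weight_sub {a : ℕ → ℕ → K} (ha : ∀ i j, a i j ≠ 0) (n : ℕ) (X Y : ℕ → ℕ → ℤ) :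
    weight n a (X - Y) = weight n a X * (weight n a Y)⁻¹ := by
  rw [eq_mul_inv_iff_mul_eq₀ (weight_ne_zero ha n Y), ← weight_add ha, sub_add_cancel]

theorem weight_mul (n : ℕ) (a b : ℕ → ℕ → K) (X : ℕ → ℕ → ℤ) :
    weight n (fun i j => a i j * b i j) X = weight n a X * weight n b X := by
  simp only [weight, ← prod_mul_distrib, mul_zpow]

theorem prod_zpow_single (a : ℕ → ℕ → K) {n k l : ℕ} (hk : k < n) (hl : l < n) :
    ∏ i ∈ range n, ∏ j ∈ range n, a i j ^ (if i = k ∧ j = l then (1 : ℤ) else 0) = a k l := by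
  rw [prod_eq_single_of_mem k (mem_range.2 hk), prod_eq_single_of_mem l (mem_range.2 hl)]
  · simp
  · intro j _ hj
    simp [hj]
  · intro i _ hi
    simp [hi]

theorem weight_shift_single {a : ℕ → ℕ → K} (ha : ∀ i j, a i j ≠ 0) {n k l : ℕ} (hk : k < n)
    (hl : l < n) : weight (n + 1) a (shift (cellInd {(k, l)})) = crossRatio a (k, l) := by
  have key : ∀ i j, entry (shift (cellInd {(k, l)})) i j =
      (if i = k ∧ j = l then 1 else 0) + (if i = k + 1 ∧ j = l + 1 then 1 else 0)
        - ((if i = k + 1 ∧ j = l then 1 else 0) + (if i = k ∧ j = l + 1 then 1 else 0)) := by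
    have hc : ∀ i j, cellInd {(k, l)} i j = if i = k ∧ j = l then 1 else 0 := by
      intro i j
      by_cases h : i = k ∧ j = l <;> simp [cellInd, h]
    rintro (_ | i) (_ | j) <;> simp only [entry, shift, hc] <;> grind
  simp only [weight, crossRatio, key]
  simp_rw [zpow_sub₀ (ha _ _), zpow_add₀ (ha _ _), prod_div_distrib, prod_mul_distrib]
  rw [prod_zpow_single a, prod_zpow_single a, prod_zpow_single a, prod_zpow_single a] <;> omega

theorem weight_shift_cellInd {a : ℕ → ℕ → K} (ha : ∀ i j, a i j ≠ 0) {n : ℕ}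
    {s : Finset (ℕ × ℕ)} (hs : s ⊆ range n ×ˢ range n) :
    weight (n + 1) a (shift (cellInd s)) = ∏ p ∈ s, crossRatio a p := by
  induction s using Finset.induction_on with
  | empty =>
    have : shift (cellInd ∅) = 0 := by
      funext i j
      rcases i with _ | i <;> rcases j with _ | j <;> simp [shift, cellInd]
    simp [this, weight, entry]
  | insert p s hp ih =>
    have : shift (cellInd (insert p s)) = shift (cellInd {p}) + shift (cellInd s) := by
      funext i j
      rcases i with _ | i <;> rcases j with _ | j <;> simp only [shift, cellInd, Pi.add_apply] <;>
        simp only [mem_insert, mem_singleton, add_zero]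
      by_cases h : (i, j) = p
      · simp [h, hp]
      · simp [h]
    have hp' := hs (mem_insert_self p s)
    rw [mem_product, mem_range, mem_range] at hp'
    rw [this, weight_add ha, ih ((subset_insert p s).trans hs), prod_insert hp,
      show p = (p.1, p.2) from rfl, weight_shift_single ha hp'.1 hp'.2]

theorem weight_shift (a : ℕ → ℕ → K) {n m : ℕ} {X : ℕ → ℕ → ℤ} (hX : IsHeight m X) :
    weight (n + 1) a (shift X) = weight n (fun i j => a (i + 1) (j + 1)) X := by
  have h0 : ∀ j, entry (shift X) 0 j = 0 := by
    rintro (_ | j) <;> simp only [entry, shift, hX.eq_min 0 _ (Or.inl rfl)] <;>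
      (simp; try omega)
  have h1 : ∀ i, entry (shift X) i 0 = 0 := by
    rintro (_ | i) <;> simp only [entry, shift, hX.eq_min _ 0 (Or.inr (Or.inl rfl))] <;>
      (simp; try omega)
  simp only [weight]
  rw [prod_range_succ', prod_eq_one (s := range (n + 1)) (fun j _ => by simp [h0]), mul_one]
  refine prod_congr rfl fun i _ => ?_
  rw [prod_range_succ', h1, zpow_zero, mul_one]
  rfl

theorem weight_succ (a : ℕ → ℕ → K) {n : ℕ} {X : ℕ → ℕ → ℤ} (hX : IsHeight n X) :
    weight (n + 1) a X = weight n a X * a n n := by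
  have h0 : ∀ j < n, entry X n j = 0 := by
    intro j hj
    simp only [entry]
    rw [hX.eq_min _ _ (by omega), hX.eq_min _ _ (by omega), hX.eq_min _ _ (by omega),
      hX.eq_min _ _ (by omega)]
    push_cast
    omega
  have h1 : ∀ j < n, entry X j n = 0 := by
    intro j hj
    simp only [entry]
    rw [hX.eq_min _ _ (by omega), hX.eq_min _ _ (by omega), hX.eq_min _ _ (by omega),
      hX.eq_min _ _ (by omega)]
    push_cast
    omega
  have h2 : entry X n n = 1 := by
    simp only [entry]
    rw [hX.eq_min _ _ (by omega), hX.eq_min _ _ (by omega), hX.eq_min _ _ (by omega),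
      hX.eq_min _ _ (by omega)]
    push_cast
    omega
  have h3 : ∏ j ∈ range (n + 1), a n j ^ entry X n j = a n n := by
    rw [prod_range_succ, h2, zpow_one, prod_eq_one, one_mul]
    intro j hj
    rw [h0 j (mem_range.1 hj), zpow_zero]
  simp only [weight]
  rw [prod_range_succ, h3]
  congr 1
  refine prod_congr rfl fun i hi => ?_
  rw [prod_range_succ, h1 i (mem_range.1 hi), zpow_zero, mul_one]

end Weight

theorem tightCount_above {n : ℕ} {A : ℕ → ℕ → ℤ} (hA : IsHeight n A) {s : Finset (ℕ × ℕ)}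
    (hs : s ⊆ cells n 1 A) :
    tightCount n A (maxAbove A - shift (cellInd s)) = flatCount n A + s.card := by
  simp only [flatCount, tightCount]
  rw [← card_union_of_disjoint]
  · congr 1
    ext ⟨i, j⟩
    have hm : (i, j) ∈ s → (i, j) ∈ cells n 1 A := fun h => hs h
    rw [mem_cells] at hm
    have h1 := hA.row i j
    have h2 := hA.row i (j + 1)
    have h3 := hA.col i j
    have h4 := hA.col (i + 1) j
    rw [mem_union, mem_filter, mem_filter]
    simp only [mem_product, mem_range, Pi.sub_apply, shift, cellInd, maxAbove]
    simp only [entry] at hm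
    split_ifs with h
    · specialize hm h
      simp only [hm.1, h, and_self, true_and, or_true, iff_true]
      omega
    · simp only [h, or_false]
      refine and_congr_right fun _ => ?_
      omega
  · rw [disjoint_left]
    rintro ⟨i, j⟩ h h'
    have hm := mem_cells.1 (hs h')
    have h1 := hA.row i j
    have h2 := hA.row i (j + 1)
    have h3 := hA.col i j
    have h4 := hA.col (i + 1) j
    simp only [mem_filter, entry] at h hm
    omega

theorem tightCount_below {m : ℕ} {A : ℕ → ℕ → ℤ} (hA : IsHeight (m + 1) A) {s : Finset (ℕ × ℕ)}
    (hs : s ⊆ cells (m + 1) (-1) A) :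
    tightCount m (minBelow A + cellInd s) A = flatCount (m + 1) A + s.card := by
  simp only [flatCount, tightCount]
  have hr : ∀ j < m + 1, A (m + 1) (j + 1) = A (m + 1) j + 1 := by
    intro j hj
    rw [hA.eq_min _ _ (by omega), hA.eq_min _ _ (by omega)]
    push_cast
    omega
  have hc : ∀ i < m + 1, A (i + 1) (m + 1) = A i (m + 1) + 1 := by
    intro i hi
    rw [hA.eq_min _ _ (by omega), hA.eq_min _ _ (by omega)]
    push_cast
    omega
  have hw : ∀ i j, i < m + 1 ∧ j < m + 1 → (i < m ∧ j < m) ∨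
      A (i + 1) (j + 1) = A (i + 1) j + 1 ∨ A (i + 1) (j + 1) = A i (j + 1) + 1 := by
    rintro i j ⟨hi, hj⟩
    rcases Nat.lt_succ_iff_lt_or_eq.1 hi with hi' | rfl
    · rcases Nat.lt_succ_iff_lt_or_eq.1 hj with hj' | rfl
      · exact Or.inl ⟨hi', hj'⟩
      · exact Or.inr (Or.inr (hc i hi))
    · exact Or.inr (Or.inl (hr j hj))
  rw [← card_union_of_disjoint]
  · congr 1
    ext ⟨i, j⟩
    have hm : (i, j) ∈ s → (i, j) ∈ cells (m + 1) (-1) A := fun h => hs h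
    rw [mem_cells] at hm
    have h1 := hA.row i j
    have h2 := hA.row i (j + 1)
    have h3 := hA.col i j
    have h4 := hA.col (i + 1) j
    have h5 := hw i j
    rw [mem_union, mem_filter, mem_filter]
    simp only [mem_product, mem_range, Pi.add_apply, cellInd, minBelow]
    simp only [entry] at hm
    split_ifs with h
    · specialize hm h
      simp only [h, or_true, iff_true]
      omega
    · simp only [h, or_false]
      omega
  · rw [disjoint_left]
    rintro ⟨i, j⟩ h h'
    have hm := mem_cells.1 (hs h')
    have h1 := hA.row i j
    have h2 := hA.row i (j + 1)
    have h3 := hA.col i j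
    have h4 := hA.col (i + 1) j
    simp only [mem_filter, entry] at h hm
    omega

/-! ### Exchanging the two ways of completing a height function -/

theorem minBelow_isHeight {m : ℕ} {A : ℕ → ℕ → ℤ} (hA : IsHeight (m + 1) A) :
    IsHeight m (minBelow A) := by
  have h := (isHeight_below hA (empty_subset _)).1
  rwa [show cellInd ∅ = 0 by funext i j; simp [cellInd], add_zero] at h

section Exchange

variable {K : Type*} [Field K]

theorem weight_shift_eq (a : ℕ → ℕ → K) {m : ℕ} {B : ℕ → ℕ → ℤ} (hB : IsHeight m B) :
    weight (m + 2) a (shift B) =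
      weight m (fun i j => a (i + 1) (j + 1)) B * a (m + 1) (m + 1) := by
  rw [weight_shift a hB, weight_succ _ hB]

theorem cells_subset (n : ℕ) (c : ℤ) (A : ℕ → ℕ → ℤ) : cells n c A ⊆ range n ×ˢ range n :=
  filter_subset _ _

open Classical in
theorem sum_below_weight {a : ℕ → ℕ → K} (ha : ∀ i j, a i j ≠ 0) (c : K) {m : ℕ}
    {A : ℕ → ℕ → ℤ} (hA : IsHeight (m + 1) A) :
    ∑ B ∈ (heights m).filter (fun B => Interlaced B A),
        c ^ tightCount m B A * (weight m (fun i j => a (i + 1) (j + 1)) B)⁻¹ =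
      c ^ flatCount (m + 1) A * (weight m (fun i j => a (i + 1) (j + 1)) (minBelow A))⁻¹ *
        ∏ p ∈ cells (m + 1) (-1) A, (1 + c * (crossRatio a p)⁻¹) := by
  rw [sum_below hA, prod_one_add, mul_sum]
  refine sum_congr rfl fun s hs => ?_
  rw [mem_powerset] at hs
  have h0 := ha (m + 1) (m + 1)
  have h1 := weight_shift_eq a (isHeight_below hA hs).1
  have h2 := weight_shift_eq a (minBelow_isHeight hA)
  have h3 : shift (minBelow A + cellInd s) = shift (minBelow A) + shift (cellInd s) := by
    funext i j
    rcases i with _ | i <;> rcases j with _ | j <;> simp [shift]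
  rw [h3, weight_add ha, weight_shift_cellInd ha (hs.trans (cells_subset _ _ _)), h2,
    mul_right_comm] at h1
  rw [← mul_right_cancel₀ h0 h1, tightCount_below hA hs, prod_mul_distrib, prod_const,
    prod_inv_distrib, mul_inv, pow_add]
  ring

open Classical in
theorem sum_above_weight {a : ℕ → ℕ → K} (ha : ∀ i j, a i j ≠ 0) (c : K) {n : ℕ}
    {A : ℕ → ℕ → ℤ} (hA : IsHeight n A) :
    ∑ C ∈ (heights (n + 1)).filter (fun C => Interlaced A C),
        c ^ tightCount n A C * weight (n + 1) a C =
      c ^ flatCount n A * weight (n + 1) a (maxAbove A) *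
        ∏ p ∈ cells n 1 A, (1 + c * (crossRatio a p)⁻¹) := by
  rw [sum_above hA, prod_one_add, mul_sum]
  refine sum_congr rfl fun s hs => ?_
  rw [mem_powerset] at hs
  rw [weight_sub ha, weight_shift_cellInd ha (hs.trans (cells_subset _ _ _)),
    tightCount_above hA hs, prod_mul_distrib, prod_const, prod_inv_distrib, pow_add]
  ring

theorem weight_mul_prod_cells {n : ℕ} {A : ℕ → ℕ → ℤ} (hA : IsHeight n A) {f : ℕ → ℕ → K}
    (hf : ∀ i j, f i j ≠ 0) :
    weight n f A * ∏ p ∈ cells n (-1) A, f p.1 p.2 = ∏ p ∈ cells n 1 A, f p.1 p.2 := by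
  simp only [weight, cells]
  rw [prod_filter, prod_filter, prod_product, prod_product]
  simp only [← prod_mul_distrib]
  refine prod_congr rfl fun i _ => prod_congr rfl fun j _ => ?_
  have h1 := hA.row i j
  have h2 := hA.row i (j + 1)
  have he : entry A i j = -1 ∨ entry A i j = 0 ∨ entry A i j = 1 := by
    simp only [entry]
    omega
  rcases he with h | h | h <;> simp [h, hf]

theorem weight_mul_weight {a : ℕ → ℕ → K} (ha : ∀ i j, a i j ≠ 0) {m : ℕ}
    {A : ℕ → ℕ → ℤ} (hA : IsHeight (m + 1) A) :
    weight (m + 1) a A * weight (m + 1) (fun i j => a (i + 1) (j + 1)) A =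
      weight (m + 2) a (maxAbove A) *
        weight m (fun i j => a (i + 1) (j + 1)) (minBelow A) := by
  have h := congrArg (weight (m + 2) a) (add_shift_eq hA)
  rw [weight_add ha, weight_add ha, weight_shift_eq a (minBelow_isHeight hA), weight_shift a hA,
    weight_succ a hA, mul_right_comm, ← mul_assoc] at h
  exact mul_right_cancel₀ (ha _ _) h

/-- The octahedron recurrence. -/
def octahedron (c : K) (a b : ℕ → ℕ → K) (i j : ℕ) : K :=
  (a i j * a (i + 1) (j + 1) + c * (a i (j + 1) * a (i + 1) j)) / b (i + 1) (j + 1)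

open Classical in
/-- The generating function of interlaced pairs of height functions. -/
noncomputable def pairSum (c : K) (m : ℕ) (a b : ℕ → ℕ → K) : K :=
  ∑ C ∈ heights (m + 1), ∑ B ∈ (heights m).filter (fun B => Interlaced B C),
    c ^ tightCount m B C * weight (m + 1) a C * (weight m (fun i j => b (i + 1) (j + 1)) B)⁻¹

theorem pairSum_succ {c : K} {a b : ℕ → ℕ → K} (ha : ∀ i j, a i j ≠ 0) (hb : ∀ i j, b i j ≠ 0)
    (hab : ∀ i j, octahedron c a b i j ≠ 0) (m : ℕ) :
    pairSum c (m + 1) a b = pairSum c m (octahedron c a b) a := by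
  classical
  simp only [pairSum]
  rw [sum_comm' (s' := fun B => (heights (m + 2)).filter fun C => Interlaced B C)
    (t' := heights (m + 1)) (by intro x y; simp only [mem_filter]; tauto)]
  refine sum_congr rfl fun A hA => ?_
  rw [mem_heights] at hA
  have hf : ∀ i j, (1 + c * (crossRatio a (i, j))⁻¹) ≠ 0 := by
    intro i j h
    apply hab i j
    have h1 := ha i j
    have h2 := ha (i + 1) (j + 1)
    have h3 := ha (i + 1) j
    have h4 := ha i (j + 1)
    simp only [crossRatio] at h
    field_simp at h
    rw [octahedron, div_eq_zero_iff]
    left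
    linear_combination h
  have hoct : octahedron c a b = fun i j =>
      (a i j * a (i + 1) (j + 1)) * ((1 + c * (crossRatio a (i, j))⁻¹) * (b (i + 1) (j + 1))⁻¹) := by
    funext i j
    have h1 := ha i j
    have h2 := ha (i + 1) (j + 1)
    have h3 := ha (i + 1) j
    have h4 := ha i (j + 1)
    have h5 := hb (i + 1) (j + 1)
    simp only [crossRatio, octahedron]
    field_simp
  have hw : weight (m + 1) (octahedron c a b) A =
      weight (m + 2) a (maxAbove A) * weight m (fun i j => a (i + 1) (j + 1)) (minBelow A) *
        weight (m + 1) (fun i j => 1 + c * (crossRatio a (i, j))⁻¹) A *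
        (weight (m + 1) (fun i j => b (i + 1) (j + 1)) A)⁻¹ := by
    rw [hoct, weight_mul, weight_mul, weight_mul, weight_mul_weight ha hA, ← mul_assoc]
    congr 1
    simp only [weight, inv_zpow, prod_inv_distrib]
  have hp := weight_mul_prod_cells hA hf
  calc _ = (∑ C ∈ (heights (m + 2)).filter (fun C => Interlaced A C),
        c ^ tightCount (m + 1) A C * weight (m + 2) a C) *
          (weight (m + 1) (fun i j => b (i + 1) (j + 1)) A)⁻¹ := by rw [sum_mul]
    _ = (∑ B ∈ (heights m).filter (fun B => Interlaced B A),
        c ^ tightCount m B A * (weight m (fun i j => a (i + 1) (j + 1)) B)⁻¹) *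
          weight (m + 1) (octahedron c a b) A := by
      rw [sum_above_weight ha c hA, sum_below_weight ha c hA, hw, ← hp]
      have := weight_ne_zero (fun i j => ha (i + 1) (j + 1)) m (minBelow A)
      field_simp
    _ = _ := by
      rw [sum_mul]
      exact sum_congr rfl fun B _ => by ring

theorem heights_of_le_one {n : ℕ} (hn : n ≤ 1) :
    heights n = {fun i j : ℕ => min (i : ℤ) j} := by
  ext H
  simp only [mem_heights, mem_singleton]
  constructor
  · intro h
    funext i j
    exact h.eq_min i j (by omega)
  · rintro rfl
    refine ⟨fun _ _ _ => rfl, ?_, ?_⟩ <;> intro i j <;> push_cast <;> omega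

theorem pairSum_zero (c : K) (a b : ℕ → ℕ → K) : pairSum c 0 a b = a 0 0 := by
  have : Interlaced (fun i j : ℕ => min (i : ℤ) j) (fun i j : ℕ => min (i : ℤ) j) := by
    intro i j
    push_cast
    omega
  simp [pairSum, heights_of_le_one, filter_singleton, this, tightCount, weight, entry]

end Exchange

/-! ### Condensation -/

section Condensation

variable {K : Type*} [Field K] [LinearOrder K] [IsStrictOrderedRing K]

/-- The λ-determinant of the top left window of size `n`, computed by condensation. -/
def condense (c : K) : ℕ → (ℕ → ℕ → K) → (ℕ → ℕ → K) → K
  | 0, _, b => b 0 0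
  | n + 1, a, b => condense c n (octahedron c a b) a

theorem octahedron_pos {c : K} (hc : 0 < c) {a b : ℕ → ℕ → K} (ha : ∀ i j, 0 < a i j)
    (hb : ∀ i j, 0 < b i j) (i j : ℕ) : 0 < octahedron c a b i j :=
  div_pos (add_pos (mul_pos (ha _ _) (ha _ _)) (mul_pos hc (mul_pos (ha _ _) (ha _ _)))) (hb _ _)

theorem condense_eq_pairSum {c : K} (hc : 0 < c) (n : ℕ) {a b : ℕ → ℕ → K}
    (ha : ∀ i j, 0 < a i j) (hb : ∀ i j, 0 < b i j) :
    condense c (n + 1) a b = pairSum c n a b := by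
  induction n generalizing a b with
  | zero => rw [pairSum_zero]; rfl
  | succ n ih =>
    rw [pairSum_succ (fun i j => (ha i j).ne') (fun i j => (hb i j).ne')
      (fun i j => (octahedron_pos hc ha hb i j).ne'), ← ih (octahedron_pos hc ha hb) ha]
    rfl

theorem condense_condense {c : K} (hc : 0 < c) (n : ℕ) {a b : ℕ → ℕ → K}
    (ha : ∀ i j, 0 < a i j) (hb : ∀ i j, 0 < b i j) :
    condense c (n + 2) a b *
        condense c n (fun i j => a (i + 1) (j + 1)) (fun i j => b (i + 1) (j + 1)) =
      condense c (n + 1) a b *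
          condense c (n + 1) (fun i j => a (i + 1) (j + 1)) (fun i j => b (i + 1) (j + 1)) +
        c * (condense c (n + 1) (fun i j => a i (j + 1)) (fun i j => b i (j + 1)) *
          condense c (n + 1) (fun i j => a (i + 1) j) (fun i j => b (i + 1) j)) := by
  induction n generalizing a b with
  | zero =>
    simp only [condense]
    rw [octahedron]
    exact div_mul_cancel₀ _ (hb _ _).ne'
  | succ n ih => exact ih (octahedron_pos hc ha hb) ha

theorem condense_transpose (c : K) (n : ℕ) (a b : ℕ → ℕ → K) :
    condense c n (fun i j => a j i) (fun i j => b j i) = condense c n a b := by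
  induction n generalizing a b with
  | zero => rfl
  | succ n ih =>
    have : octahedron c (fun i j => a j i) (fun i j => b j i) =
        fun i j => octahedron c a b j i := by
      funext i j
      simp only [octahedron]
      ring
    rw [condense, this, ih]
    rfl

theorem condense_reverse (c : K) (n : ℕ) {a b a' b' : ℕ → ℕ → K}
    (ha : ∀ i j, i ≤ n → j ≤ n → a' i j = a (n - i) (n - j))
    (hb : ∀ i j, 1 ≤ i → i ≤ n → 1 ≤ j → j ≤ n → b' i j = b (n + 1 - i) (n + 1 - j)) :
    condense c (n + 1) a' b' = condense c (n + 1) a b := by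
  induction n generalizing a b a' b' with
  | zero => simpa [condense] using ha 0 0 le_rfl le_rfl
  | succ n ih =>
    refine ih (fun i j hi hj => ?_) (fun i j _ hi _ hj => ha i j (by omega) (by omega))
    simp only [octahedron]
    rw [ha i j (by omega) (by omega), ha (i + 1) (j + 1) (by omega) (by omega),
      ha i (j + 1) (by omega) (by omega), ha (i + 1) j (by omega) (by omega),
      hb (i + 1) (j + 1) (by omega) (by omega) (by omega) (by omega)]
    rw [show n + 1 + 1 - (i + 1) = n - i + 1 by omega, show n + 1 + 1 - (j + 1) = n - j + 1 by omega,
      show n + 1 - (i + 1) = n - i by omega, show n + 1 - (j + 1) = n - j by omega,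
      show n + 1 - i = n - i + 1 by omega, show n + 1 - j = n - j + 1 by omega]
    ring

end Condensation

/-! ### Alternating sign matrices and height functions -/

section Bijection

theorem sum_range_entry_row {n : ℕ} {H : ℕ → ℕ → ℤ} (hH : IsHeight n H) (i j : ℕ) :
    ∑ x ∈ range j, entry H i x = H (i + 1) j - H i j := by
  induction j with
  | zero =>
    rw [hH.eq_min _ 0 (by simp), hH.eq_min _ 0 (by simp)]
    push_cast
    simp only [range_zero, sum_empty]
    omega
  | succ j ih =>
    rw [sum_range_succ, ih, entry]
    ring

theorem sum_range_entry_col {n : ℕ} {H : ℕ → ℕ → ℤ} (hH : IsHeight n H) (i j : ℕ) :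
    ∑ x ∈ range i, entry H x j = H i (j + 1) - H i j := by
  induction i with
  | zero =>
    rw [hH.eq_min 0 _ (by simp), hH.eq_min 0 _ (by simp)]
    push_cast
    simp only [range_zero, sum_empty]
    omega
  | succ i ih =>
    rw [sum_range_succ, ih, entry]
    ring

theorem entry_eq {n : ℕ} {H : ℕ → ℕ → ℤ} (hH : IsHeight n H) (i j : ℕ) :
    entry H i j = -1 ∨ entry H i j = 0 ∨ entry H i j = 1 := by
  have h1 := hH.row i j
  have h2 := hH.row i (j + 1)
  simp only [entry]
  omega

/-- The matrix with a given height function. -/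
def matOf (n : ℕ) (H : ℕ → ℕ → ℤ) : Fin n → Fin n → ℤ := fun i j => entry H i j

theorem sum_fin_filter_le {n : ℕ} (f : ℕ → ℤ) (i : Fin n) :
    ∑ x ∈ univ.filter (fun x : Fin n => x ≤ i), f x = ∑ x ∈ range (i + 1), f x := by
  rw [sum_filter]
  rw [show (∑ x : Fin n, if x ≤ i then f x else 0) =
      ∑ x : Fin n, (fun y : ℕ => if y ≤ (i : ℕ) then f y else 0) x from rfl,
    Fin.sum_univ_eq_sum_range (fun y : ℕ => if y ≤ (i : ℕ) then f y else 0) n, ← sum_filter]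
  congr 1
  ext y
  simp only [mem_filter, mem_range]
  omega

theorem isASM_matOf {n : ℕ} {H : ℕ → ℕ → ℤ} (hH : IsHeight n H) : IsASM (matOf n H) := by
  refine ⟨fun i j => entry_eq hH i j, fun i j => ?_, fun i j => ?_, fun i => ?_, fun j => ?_⟩
  · have h : ∑ j' ∈ univ.filter (fun j' => j' ≤ j), matOf n H i j' = _ :=
      (sum_fin_filter_le (fun x => entry H i x) j).trans (sum_range_entry_row hH _ _)
    rw [h]
    have := hH.row i (j + 1)
    omega
  · have h : ∑ i' ∈ univ.filter (fun i' => i' ≤ i), matOf n H i' j = _ :=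
      (sum_fin_filter_le (fun x => entry H x j) i).trans (sum_range_entry_col hH _ _)
    rw [h]
    have := hH.col (i + 1) j
    omega
  · have h : ∑ j', matOf n H i j' = _ :=
      (Fin.sum_univ_eq_sum_range (fun x => entry H i x) n).trans (sum_range_entry_row hH _ _)
    rw [h, hH.eq_min _ _ (by omega), hH.eq_min _ _ (by omega)]
    push_cast
    omega
  · have h : ∑ i', matOf n H i' j = _ :=
      (Fin.sum_univ_eq_sum_range (fun x => entry H x j) n).trans (sum_range_entry_col hH _ _)
    rw [h, hH.eq_min _ _ (by omega), hH.eq_min _ _ (by omega)]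
    push_cast
    omega

/-- The extension of a matrix to `ℕ × ℕ` by the identity matrix. -/
def extendMat {n : ℕ} (A : Fin n → Fin n → ℤ) (i j : ℕ) : ℤ :=
  if h : i < n ∧ j < n then A ⟨i, h.1⟩ ⟨j, h.2⟩ else if i = j then 1 else 0

/-- The corner sums of the extension of a matrix. -/
def cornerSum {n : ℕ} (A : Fin n → Fin n → ℤ) (i j : ℕ) : ℤ :=
  ∑ x ∈ range i, ∑ y ∈ range j, extendMat A x y

theorem entry_cornerSum {n : ℕ} (A : Fin n → Fin n → ℤ) (i j : ℕ) :
    entry (cornerSum A) i j = extendMat A i j := by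
  simp only [entry, cornerSum, sum_range_succ, sum_add_distrib]
  ring

theorem cornerSum_transpose {n : ℕ} (A : Fin n → Fin n → ℤ) (i j : ℕ) :
    cornerSum (fun i j => A j i) i j = cornerSum A j i := by
  rw [cornerSum, sum_comm]
  refine sum_congr rfl fun y _ => sum_congr rfl fun x _ => ?_
  simp only [extendMat, and_comm, eq_comm]

theorem IsASM.transpose {n : ℕ} {A : Fin n → Fin n → ℤ} (hA : IsASM A) :
    IsASM (fun i j => A j i) :=
  ⟨fun i j => hA.1 j i, fun i j => hA.2.2.1 j i, fun i j => hA.2.1 j i, hA.2.2.2.2, hA.2.2.2.1⟩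

theorem extendMat_apply {n : ℕ} (A : Fin n → Fin n → ℤ) (i j : Fin n) :
    extendMat A i j = A i j := by
  simp [extendMat]

theorem sum_extendMat_col {n : ℕ} {A : Fin n → Fin n → ℤ} (hA : IsASM A) (i j : ℕ) :
    (∑ x ∈ range i, extendMat A x j = 0 ∨ ∑ x ∈ range i, extendMat A x j = 1) ∧
      (n ≤ i ∨ n ≤ j → ∑ x ∈ range i, extendMat A x j = if j < i then 1 else 0) := by
  by_cases hj : j < n
  · have hn : ∑ x ∈ range n, extendMat A x j = 1 := by
      rw [← Fin.sum_univ_eq_sum_range (fun x => extendMat A x j) n, ← hA.2.2.2.2 ⟨j, hj⟩]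
      exact sum_congr rfl fun x _ => extendMat_apply A x ⟨j, hj⟩
    by_cases hi : n ≤ i
    · have : ∑ x ∈ range i, extendMat A x j = 1 := by
        rw [← hn]
        refine (sum_subset (range_mono hi) fun x _ hx => ?_).symm
        rw [mem_range, not_lt] at hx
        rw [extendMat, dif_neg (by omega), if_neg (by omega)]
      simp [this, show j < i by omega]
    · refine ⟨?_, fun h => by omega⟩
      rcases i with _ | i
      · simp
      have := hA.2.2.1 ⟨i, by omega⟩ ⟨j, hj⟩
      have h2 := sum_fin_filter_le (fun x => extendMat A x j) (⟨i, by omega⟩ : Fin n)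
      rw [← h2]
      convert this using 3 <;> exact extendMat_apply A _ ⟨j, hj⟩
  · have : ∑ x ∈ range i, extendMat A x j = if j < i then 1 else 0 := by
      rw [sum_congr rfl (g := fun x => if x = j then 1 else 0)
        (fun x _ => by rw [extendMat, dif_neg (by omega)]), sum_ite_eq']
      simp
    rw [this]
    refine ⟨?_, fun _ => rfl⟩
    split_ifs <;> simp

theorem cornerSum_succ {n : ℕ} (A : Fin n → Fin n → ℤ) (i j : ℕ) :
    cornerSum A i (j + 1) = cornerSum A i j + ∑ x ∈ range i, extendMat A x j := by
  simp only [cornerSum, sum_range_succ, sum_add_distrib]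

theorem cornerSum_eq_min {n : ℕ} {A : Fin n → Fin n → ℤ} (hA : IsASM A) {i : ℕ} (hi : n ≤ i)
    (j : ℕ) : cornerSum A i j = min (i : ℤ) j := by
  induction j with
  | zero => simp [cornerSum]
  | succ j ih =>
    rw [cornerSum_succ, ih, (sum_extendMat_col hA i j).2 (Or.inl hi)]
    split_ifs <;> push_cast <;> omega

theorem isHeight_cornerSum {n : ℕ} {A : Fin n → Fin n → ℤ} (hA : IsASM A) :
    IsHeight n (cornerSum A) := by
  refine ⟨?_, fun i j => ?_, fun i j => ?_⟩
  · rintro i j (rfl | rfl | h | h)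
    · simp [cornerSum]
    · simp [cornerSum]
    · exact cornerSum_eq_min hA h j
    · rw [← cornerSum_transpose, cornerSum_eq_min hA.transpose h, min_comm]
  · rw [← cornerSum_transpose, ← cornerSum_transpose A, cornerSum_succ]
    have := (sum_extendMat_col hA.transpose j i).1
    omega
  · rw [cornerSum_succ]
    have := (sum_extendMat_col hA i j).1
    omega

theorem matOf_cornerSum {n : ℕ} (A : Fin n → Fin n → ℤ) : matOf n (cornerSum A) = A := by
  funext i j
  rw [matOf, entry_cornerSum, extendMat_apply]

theorem cornerSum_matOf {n : ℕ} {H : ℕ → ℕ → ℤ} (hH : IsHeight n H) :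
    cornerSum (matOf n H) = H := by
  have he : ∀ i j, extendMat (matOf n H) i j = entry H i j := by
    intro i j
    by_cases h : i < n ∧ j < n
    · simp [extendMat, h, matOf]
    · rw [extendMat, dif_neg h, entry, hH.eq_min _ _ (by omega), hH.eq_min _ _ (by omega),
        hH.eq_min _ _ (by omega), hH.eq_min _ _ (by omega)]
      split_ifs <;> push_cast <;> omega
  funext i j
  simp only [cornerSum, he, sum_range_entry_row hH]
  rw [sum_range_sub (fun x => H x j), hH.eq_min 0 j (by simp)]
  simp

open Classical in
theorem sum_isASM {M : Type*} [AddCommMonoid M] (n : ℕ) (F : (Fin n → Fin n → ℤ) → M) :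
    (∑ e : Fin n → Fin n → Fin 3, if IsASM (asmMat e) then F (asmMat e) else 0) =
      ∑ H ∈ heights n, F (matOf n H) := by
  have hdec : ∀ H, IsHeight n H →
      asmMat (fun i j : Fin n => Fin.ofNat 3 (entry H i j + 1).toNat) = matOf n H := by
    intro H hH
    funext i j
    simp only [asmMat, matOf]
    rcases entry_eq hH i j with h | h | h <;> rw [h] <;> rfl
  have hinj : ∀ e e' : Fin n → Fin n → Fin 3, asmMat e = asmMat e' → e = e' := by
    intro e e' h
    funext i j
    have := congrFun (congrFun h i) j
    simp only [asmMat] at this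
    omega
  rw [← sum_filter]
  refine sum_bij' (fun e _ => cornerSum (asmMat e))
    (fun H _ => fun i j : Fin n => Fin.ofNat 3 (entry H i j + 1).toNat) ?_ ?_ ?_ ?_ ?_
  · intro e he
    simpa using isHeight_cornerSum (mem_filter.1 he).2
  · intro H hH
    rw [mem_heights] at hH
    refine mem_filter.2 ⟨mem_univ _, ?_⟩
    rw [hdec H hH]
    exact isASM_matOf hH
  · intro e he
    apply hinj
    rw [hdec _ (isHeight_cornerSum (mem_filter.1 he).2), matOf_cornerSum]
  · intro H hH
    rw [mem_heights] at hH
    rw [hdec H hH, cornerSum_matOf hH]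
  · intro e _
    rw [matOf_cornerSum]

end Bijection

/-! ### Statistics in terms of height functions -/

section Statistics

theorem muASM_matOf (n : ℕ) (H : ℕ → ℕ → ℤ) : muASM (matOf n H) = (cells n (-1) H).card := by
  rw [muASM, card_filter, cells, card_filter, Fintype.sum_prod_type, sum_product]
  rw [← Fin.sum_univ_eq_sum_range
    (fun i => ∑ j ∈ range n, if entry H i j = -1 then 1 else 0) n]
  refine sum_congr rfl fun i _ => ?_
  exact Fin.sum_univ_eq_sum_range (fun j => if entry H i j = -1 then 1 else 0) n

theorem nuASM_matOf {n : ℕ} {H : ℕ → ℕ → ℤ} (hH : IsHeight n H) :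
    nuASM (matOf n H) = flatCount n H := by
  have hrow : ∀ i j : Fin n, (∑ y : Fin n, if j ≤ y then matOf n H i y else 0) =
      1 - (H (i + 1) j - H i j) := by
    intro i j
    have h1 : ∑ y : Fin n, matOf n H i y = 1 := (isASM_matOf hH).2.2.2.1 i
    have h2 : (∑ y : Fin n, if (y : ℕ) < j then entry H i y else 0) = H (i + 1) j - H i j := by
      rw [Fin.sum_univ_eq_sum_range (fun y : ℕ => if y < (j : ℕ) then entry H i y else 0) n,
        ← sum_filter, ← sum_range_entry_row hH]
      congr 1
      ext y
      simp only [mem_filter, mem_range]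
      omega
    rw [← h1, ← h2, ← sum_sub_distrib]
    refine sum_congr rfl fun y _ => ?_
    simp only [matOf, Fin.le_def]
    split_ifs <;> omega
  have hcol : ∀ i j : Fin n, (∑ x : Fin n, if i < x then matOf n H x j else 0) =
      1 - (H (i + 1) (j + 1) - H (i + 1) j) := by
    intro i j
    have h1 : ∑ x : Fin n, matOf n H x j = 1 := (isASM_matOf hH).2.2.2.2 j
    have h2 : (∑ x : Fin n, if (x : ℕ) ≤ i then entry H x j else 0) =
        H (i + 1) (j + 1) - H (i + 1) j := by
      rw [Fin.sum_univ_eq_sum_range (fun x : ℕ => if x ≤ (i : ℕ) then entry H x j else 0) n,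
        ← sum_filter, ← sum_range_entry_col hH]
      congr 1
      ext y
      simp only [mem_filter, mem_range]
      omega
    rw [← h1, ← h2, ← sum_sub_distrib]
    refine sum_congr rfl fun y _ => ?_
    simp only [matOf, Fin.lt_def]
    split_ifs <;> omega
  have key : (∑ i : Fin n, ∑ i' : Fin n, ∑ j : Fin n, ∑ j' : Fin n,
      if i < i' ∧ j' ≤ j then matOf n H i j * matOf n H i' j' else 0) = (flatCount n H : ℤ) := by
    have : (flatCount n H : ℤ) =
        ∑ i : Fin n, ∑ j : Fin n, if H i j = H (i + 1) (j + 1) then (1 : ℤ) else 0 := by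
      rw [flatCount, tightCount, card_filter, sum_product]
      push_cast
      rw [← Fin.sum_univ_eq_sum_range
        (fun i => ∑ j ∈ range n, if H i j = H (i + 1) (j + 1) then (1 : ℤ) else 0) n]
      refine sum_congr rfl fun i _ => ?_
      exact (Fin.sum_univ_eq_sum_range
        (fun j => if H i j = H (i + 1) (j + 1) then (1 : ℤ) else 0) n).symm
    rw [this]
    refine sum_congr rfl fun i _ => ?_
    calc _ = ∑ j' : Fin n, ∑ j : Fin n, ∑ i' : Fin n,
          (if j' ≤ j then matOf n H i j else 0) * (if i < i' then matOf n H i' j' else 0) := by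
          rw [sum_congr rfl fun i' _ => sum_comm, sum_comm,
            sum_congr rfl fun j' _ => sum_comm]
          refine sum_congr rfl fun j' _ => sum_congr rfl fun j _ => sum_congr rfl fun i' _ => ?_
          by_cases h : i < i' <;> by_cases h' : j' ≤ j <;> simp [h, h']
      _ = _ := by
        refine sum_congr rfl fun j _ => ?_
        rw [← sum_mul_sum, hrow, hcol]
        have h1 := hH.row i j
        have h2 := hH.col (i + 1) j
        rcases (by omega : H (i + 1) j = H i j ∨ H (i + 1) j = H i j + 1) with h | h <;>
          rcases (by omega : H (i + 1) (j + 1) = H (i + 1) j ∨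
            H (i + 1) (j + 1) = H (i + 1) j + 1) with h' | h' <;>
          rw [h', h] <;> (simp; try omega)
  rw [nuASM, key, Int.toNat_natCast]

end Statistics


/-! ### Boundary statistics -/

section Boundary

variable {K : Type*} [Field K]

theorem exists_eq_ite_of_sum_eq_one {n : ℕ} {f : Fin n → ℤ} (hf : ∀ j, f j = 0 ∨ f j = 1)
    (hs : ∑ j, f j = 1) : ∃ k, ∀ j, f j = if j = k then 1 else 0 := by
  have hk : ∃ k, f k = 1 := by
    by_contra! h
    have : ∑ j, f j = 0 := sum_eq_zero fun j _ => (hf j).resolve_right (h j)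
    omega
  obtain ⟨k, hk⟩ := hk
  refine ⟨k, fun j => ?_⟩
  split_ifs with h
  · rw [h, hk]
  · have h0 : ∑ j ∈ univ.erase k, f j = 0 := by
      have := add_sum_erase univ f (mem_univ k)
      omega
    exact (sum_eq_zero_iff_of_nonneg fun i _ => by have := hf i; omega).1 h0 j
      (mem_erase.2 ⟨h, mem_univ j⟩)

theorem prod_zpow_eq_before (c z : K) {n : ℕ} {f : Fin n → ℤ} (hf : ∀ j, f j = 0 ∨ f j = 1)
    (hs : ∑ j, f j = 1) :
    ∏ j : Fin n, (c * z ^ (j : ℕ)) ^ f j =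
      c * z ^ (univ.filter fun j : Fin n => f j = 0 ∧ ∃ j', j < j' ∧ f j' = 1).card := by
  obtain ⟨k, hk⟩ := exists_eq_ite_of_sum_eq_one hf hs
  have h : (univ.filter fun j : Fin n => f j = 0 ∧ ∃ j', j < j' ∧ f j' = 1) = Iio k := by
    ext j
    simp only [mem_filter, mem_univ, true_and, mem_Iio, hk]
    grind
  rw [h, Fin.card_Iio, prod_eq_single k]
  · simp [hk]
  · intro j _ hj
    simp [hk, hj]
  · simp

theorem prod_zpow_eq_after (c z : K) {n : ℕ} {f : Fin n → ℤ} (hf : ∀ j, f j = 0 ∨ f j = 1)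
    (hs : ∑ j, f j = 1) :
    ∏ j : Fin n, (c * z ^ (n - 1 - (j : ℕ))) ^ f j =
      c * z ^ (univ.filter fun j : Fin n => f j = 0 ∧ ∃ j', j' < j ∧ f j' = 1).card := by
  obtain ⟨k, hk⟩ := exists_eq_ite_of_sum_eq_one hf hs
  have h : (univ.filter fun j : Fin n => f j = 0 ∧ ∃ j', j' < j ∧ f j' = 1) = Ioi k := by
    ext j
    simp only [mem_filter, mem_univ, true_and, mem_Ioi, hk]
    grind
  rw [h, Fin.card_Ioi, prod_eq_single k]
  · simp [hk]
  · intro j _ hj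
    simp [hk, hj]
  · simp

theorem weight_row {n k : ℕ} (hk : k < n) (f : ℕ → K) (H : ℕ → ℕ → ℤ) :
    weight n (fun i j => if i = k then f j else 1) H =
      ∏ j : Fin n, f j ^ entry H k j := by
  rw [weight, prod_eq_single k]
  · simp only [if_true]
    exact (Fin.prod_univ_eq_prod_range (fun j => f j ^ entry H k j) n).symm
  · intro i _ hi
    simp [hi]
  · intro h
    exact absurd (mem_range.2 hk) h

theorem weight_col {n k : ℕ} (hk : k < n) (f : ℕ → K) (H : ℕ → ℕ → ℤ) :
    weight n (fun i j => if j = k then f i else 1) H =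
      ∏ i : Fin n, f i ^ entry H i k := by
  rw [weight, prod_comm, prod_eq_single k]
  · simp only [if_true]
    exact (Fin.prod_univ_eq_prod_range (fun i => f i ^ entry H i k) n).symm
  · intro i _ hi
    simp [hi]
  · intro h
    exact absurd (mem_range.2 hk) h

/-- The weights placed on the boundary of an `(m + 1) × (m + 1)` window. -/
def boundary (m : ℕ) (c1 c2 c3 c4 z1 z2 z3 z4 : K) (i j : ℕ) : K :=
  (if i = 0 then c1 * z1 ^ j else 1) * (if j = m then c2 * z2 ^ (m - i) else 1) *
    (if i = m then c3 * z3 ^ (m - j) else 1) * (if j = 0 then c4 * z4 ^ i else 1)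

theorem weight_boundary (m : ℕ) (c1 c2 c3 c4 z1 z2 z3 z4 : K) {H : ℕ → ℕ → ℤ}
    (hH : IsHeight (m + 1) H) :
    weight (m + 1) (boundary m c1 c2 c3 c4 z1 z2 z3 z4) H =
      c1 * z1 ^ rhoT (matOf (m + 1) H) * (c2 * z2 ^ rhoR (matOf (m + 1) H)) *
        (c3 * z3 ^ rhoB (matOf (m + 1) H)) * (c4 * z4 ^ rhoL (matOf (m + 1) H)) := by
  have hA := isASM_matOf hH
  unfold boundary
  rw [weight_mul, weight_mul, weight_mul, weight_row (by omega) (fun j => c1 * z1 ^ j),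
    weight_col (by omega) (fun i => c2 * z2 ^ (m - i)),
    weight_row (by omega) (fun j => c3 * z3 ^ (m - j)),
    weight_col (by omega) (fun i => c4 * z4 ^ i)]
  have hT : ∀ j : ℕ, entry H 0 j = 0 ∨ entry H 0 j = 1 := by
    intro j
    have := hH.col 1 j
    rw [entry, hH.eq_min 0 _ (by simp), hH.eq_min 0 _ (by simp)]
    simp only [zero_add]
    push_cast
    omega
  have hL : ∀ i : ℕ, entry H i 0 = 0 ∨ entry H i 0 = 1 := by
    intro i
    have := hH.row i 1
    rw [entry, hH.eq_min _ 0 (by simp), hH.eq_min _ 0 (by simp)]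
    simp only [zero_add]
    push_cast
    omega
  have hB : ∀ j : Fin (m + 1), entry H m j = 0 ∨ entry H m j = 1 := by
    intro j
    have := hH.col m j
    rw [entry, hH.eq_min (m + 1) _ (by simp), hH.eq_min (m + 1) _ (by simp)]
    push_cast
    omega
  have hR : ∀ i : Fin (m + 1), entry H i m = 0 ∨ entry H i m = 1 := by
    intro i
    have := hH.row i m
    rw [entry, hH.eq_min _ (m + 1) (by simp), hH.eq_min _ (m + 1) (by simp)]
    push_cast
    omega
  congr 1
  · congr 1
    · congr 1
      · exact prod_zpow_eq_before c1 z1 (fun j => hT j) (hA.2.2.2.1 0)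
      · exact prod_zpow_eq_after c2 z2 hR (hA.2.2.2.2 (Fin.last m))
    · exact prod_zpow_eq_after c3 z3 hB (hA.2.2.2.1 (Fin.last m))
  · exact prod_zpow_eq_before c4 z4 (fun i => hL i) (hA.2.2.2.2 0)

end Boundary

/-! ### Condensation of boundary weights -/

section Refined

variable {K : Type*} [Field K] [LinearOrder K] [IsStrictOrderedRing K]

theorem condense_boundary {c : K} (hc : 0 < c) (m : ℕ) {c1 c2 c3 c4 z1 z2 z3 z4 : K}
    {a : ℕ → ℕ → K} (ha : ∀ i j, 0 < a i j)
    (h : ∀ i < m + 1, ∀ j < m + 1, a i j = boundary m c1 c2 c3 c4 z1 z2 z3 z4 i j) :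
    condense c (m + 1) a (fun _ _ => 1) =
      c1 * c2 * c3 * c4 * Zqua (m + 1) c (c + 1) z1 z2 z3 z4 := by
  classical
  have hw : ∀ (n : ℕ) (X : ℕ → ℕ → ℤ), weight n (fun _ _ => (1 : K)) X = 1 := by
    intro n X
    simp [weight]
  rw [condense_eq_pairSum hc m ha (fun _ _ => one_pos), pairSum, Zqua]
  rw [show (∑ e : Fin (m + 1) → Fin (m + 1) → Fin 3, _) = _ from sum_isASM (m + 1) (fun A =>
    c ^ nuASM A * (c + 1) ^ muASM A * z1 ^ rhoT A * z2 ^ rhoR A * z3 ^ rhoB A * z4 ^ rhoL A),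
    mul_sum]
  refine sum_congr rfl fun H hH => ?_
  rw [mem_heights] at hH
  have h1 := sum_below_weight (a := fun _ _ => (1 : K)) (fun _ _ => one_ne_zero) c hH
  simp only [hw, inv_one, mul_one, crossRatio, div_one, prod_const] at h1
  have h2 : weight (m + 1) a H = weight (m + 1) (boundary m c1 c2 c3 c4 z1 z2 z3 z4) H :=
    prod_congr rfl fun i hi => prod_congr rfl fun j hj => by
      rw [h i (mem_range.1 hi) j (mem_range.1 hj)]
  simp only [hw, inv_one, mul_one]
  rw [← sum_mul, h1, h2, weight_boundary _ _ _ _ _ _ _ _ _ hH, nuASM_matOf hH, muASM_matOf]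
  ring

theorem boundary_pos (m : ℕ) {z1 z2 z3 z4 : K} (h1 : 0 < z1) (h2 : 0 < z2) (h3 : 0 < z3)
    (h4 : 0 < z4) (i j : ℕ) : 0 < boundary m 1 1 1 1 z1 z2 z3 z4 i j := by
  unfold boundary
  refine mul_pos (mul_pos (mul_pos ?_ ?_) ?_) ?_ <;> split_ifs <;> positivity

theorem Zqua_mul_Zun_of_pos {x z1 z2 z3 z4 : K} (hx : 0 < x) (h1 : 0 < z1) (h2 : 0 < z2)
    (h3 : 0 < z3) (h4 : 0 < z4) (n : ℕ) :
    Zqua (n + 3) x (x + 1) z1 z2 z3 z4 * Zun (n + 1) x (x + 1) =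
      Zadj (n + 2) x (x + 1) z4 z1 * Zadj (n + 2) x (x + 1) z2 z3
      + x * z1 * z2 * z3 * z4 *
          Zbaradj (n + 2) x (x + 1) z1 z2 * Zbaradj (n + 2) x (x + 1) z3 z4 := by
  set a := boundary (n + 2) 1 1 1 1 z1 z2 z3 z4 with ha
  have hpos : ∀ i j, 0 < a i j := boundary_pos (n + 2) h1 h2 h3 h4
  have key := condense_condense hx (n + 1) hpos (b := fun _ _ => 1) (fun _ _ => one_pos)
  have full : condense x (n + 1 + 2) a (fun _ _ => 1) = Zqua (n + 3) x (x + 1) z1 z2 z3 z4 := by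
    rw [condense_boundary hx (n + 2) hpos (fun _ _ _ _ => rfl)]
    ring
  have center : condense x (n + 1) (fun i j => a (i + 1) (j + 1)) (fun _ _ => 1) =
      Zun (n + 1) x (x + 1) := by
    rw [Zun, condense_boundary hx n (fun i j => hpos _ _) (c1 := 1) (c2 := 1) (c3 := 1) (c4 := 1)
      (z1 := 1) (z2 := 1) (z3 := 1) (z4 := 1)]
    · ring
    · intro i hi j hj
      simp only [ha, boundary, one_pow, mul_one, ite_self]
      simp [show ¬ i = n + 1 by omega, show ¬ j = n + 1 by omega]
  have topLeft : condense x (n + 1 + 1) a (fun _ _ => 1) = Zadj (n + 2) x (x + 1) z4 z1 := by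
    rw [← condense_transpose, Zadj, condense_boundary hx (n + 1) (fun i j => hpos _ _)
      (c1 := 1) (c2 := 1) (c3 := 1) (c4 := 1) (z1 := z4) (z2 := 1) (z3 := 1) (z4 := z1)]
    · ring
    · intro i hi j hj
      simp only [ha, boundary, one_pow, mul_one, one_mul, ite_self]
      simp only [show ¬ i = n + 2 by omega, show ¬ j = n + 2 by omega, if_false, mul_one]
      ring
  have bottomRight : condense x (n + 1 + 1) (fun i j => a (i + 1) (j + 1)) (fun _ _ => 1) =
      Zadj (n + 2) x (x + 1) z2 z3 := by
    rw [← condense_transpose, ← condense_reverse x (n + 1)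
      (a' := fun i j => a (n + 1 - j + 1) (n + 1 - i + 1)) (b' := fun _ _ => 1)
      (fun _ _ _ _ => rfl) (fun _ _ _ _ _ _ => rfl), Zadj,
      condense_boundary hx (n + 1) (fun i j => hpos _ _)
      (c1 := 1) (c2 := 1) (c3 := 1) (c4 := 1) (z1 := z2) (z2 := 1) (z3 := 1) (z4 := z3)]
    · ring
    · intro i hi j hj
      simp only [ha, boundary, one_pow, mul_one, one_mul, ite_self]
      simp only [show n + 1 - j + 1 = n + 2 ↔ j = 0 by omega,
        show n + 1 - i + 1 = n + 2 ↔ i = 0 by omega, Nat.add_eq_zero_iff, one_ne_zero, and_false,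
        if_false, mul_one, one_mul, show n + 2 - (n + 1 - j + 1) = j by omega,
        show n + 2 - (n + 1 - i + 1) = i by omega]
  have topRight : condense x (n + 1 + 1) (fun i j => a i (j + 1)) (fun _ _ => 1) =
      z1 * z2 * Zbaradj (n + 2) x (x + 1) z1 z2 := by
    rw [Zbaradj, condense_boundary hx (n + 1) (fun i j => hpos _ _)
      (c1 := z1) (c2 := z2) (c3 := 1) (c4 := 1) (z1 := z1) (z2 := z2) (z3 := 1) (z4 := 1)]
    · ring
    · intro i hi j hj
      simp only [ha, boundary, one_pow, mul_one, one_mul, ite_self]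
      simp only [show ¬ i = n + 2 by omega, show j + 1 = n + 2 ↔ j = n + 1 by omega,
        Nat.add_eq_zero_iff, one_ne_zero, and_false,
        if_false, mul_one, show n + 2 - i = n + 1 - i + 1 by omega, pow_succ']
  have bottomLeft : condense x (n + 1 + 1) (fun i j => a (i + 1) j) (fun _ _ => 1) =
      z3 * z4 * Zbaradj (n + 2) x (x + 1) z3 z4 := by
    rw [← condense_reverse x (n + 1)
      (a' := fun i j => a (n + 1 - i + 1) (n + 1 - j)) (b' := fun _ _ => 1)
      (fun _ _ _ _ => rfl) (fun _ _ _ _ _ _ => rfl), Zbaradj,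
      condense_boundary hx (n + 1) (fun i j => hpos _ _)
      (c1 := z3) (c2 := z4) (c3 := 1) (c4 := 1) (z1 := z3) (z2 := z4) (z3 := 1) (z4 := 1)]
    · ring
    · intro i hi j hj
      simp only [ha, boundary, one_pow, mul_one, one_mul, ite_self]
      simp only [show n + 1 - i + 1 = n + 2 ↔ i = 0 by omega,
        show ¬ n + 1 - j = n + 2 by omega, show n + 1 - j = 0 ↔ j = n + 1 by omega,
        Nat.add_eq_zero_iff, one_ne_zero, and_false,
        if_false, mul_one, one_mul, show n + 2 - (n + 1 - j) = j + 1 by omega, pow_succ']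
  rw [full, center, topLeft, bottomRight, topRight, bottomLeft] at key
  rw [key]
  ring

end Refined

/-! ### Transfer to commutative rings -/

section Transfer

theorem Zqua_map {R S : Type*} [CommRing R] [CommRing S] (f : R →+* S) (n : ℕ)
    (x y z1 z2 z3 z4 : R) :
    f (Zqua n x y z1 z2 z3 z4) = Zqua n (f x) (f y) (f z1) (f z2) (f z3) (f z4) := by
  simp only [Zqua, map_sum, apply_ite f, map_mul, map_pow, map_zero]

theorem Zqua_mul_Zun_mvPolynomial (n : ℕ) :
    ∃ x z1 z2 z3 z4 : MvPolynomial (Fin 5) ℤ,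
      ![x, z1, z2, z3, z4] = MvPolynomial.X ∧
      Zqua (n + 3) x (x + 1) z1 z2 z3 z4 * Zun (n + 1) x (x + 1) =
        Zadj (n + 2) x (x + 1) z4 z1 * Zadj (n + 2) x (x + 1) z2 z3
        + x * z1 * z2 * z3 * z4 *
            Zbaradj (n + 2) x (x + 1) z1 z2 * Zbaradj (n + 2) x (x + 1) z3 z4 := by
  refine ⟨MvPolynomial.X 0, MvPolynomial.X 1, MvPolynomial.X 2, MvPolynomial.X 3,
    MvPolynomial.X 4, ?_, ?_⟩
  · funext i
    fin_cases i <;> rfl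
  refine MvPolynomial.funext_set (fun _ => Set.Ioi 0) (fun _ => Set.Ioi_infinite 0) ?_
  intro v hv
  have hv' : ∀ i, (0 : ℚ) < v i := fun i => by exact_mod_cast hv i trivial
  apply Int.cast_injective (α := ℚ)
  have key := Zqua_mul_Zun_of_pos (hv' 0) (hv' 1) (hv' 2) (hv' 3) (hv' 4) n
  simp only [Zun, Zadj, Zbaradj] at key ⊢
  have hm := Zqua_map ((Int.castRingHom ℚ).comp (MvPolynomial.eval v))
  simp only [RingHom.comp_apply, eq_intCast] at hm
  simp only [map_mul, map_add, Int.cast_mul, Int.cast_add, hm, MvPolynomial.eval_X, map_one,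
    Int.cast_one]
  exact key

end Transfer

/-- Quadratic relation for the quadruply-refined ASM generating function at
`y = x + 1`, stated for all values of the variables in any commutative ring,
equivalently as an identity of polynomials in `ℤ[x,z1,z2,z3,z4]`. -/
theorem stmt12 {R : Type*} [CommRing R] (x z1 z2 z3 z4 : R) (n : ℕ) (hn : 3 ≤ n) :
    Zqua n x (x + 1) z1 z2 z3 z4 * Zun (n - 2) x (x + 1) =
      Zadj (n - 1) x (x + 1) z4 z1 * Zadj (n - 1) x (x + 1) z2 z3
      + x * z1 * z2 * z3 * z4 *
          Zbaradj (n - 1) x (x + 1) z1 z2 * Zbaradj (n - 1) x (x + 1) z3 z4 := by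
  obtain ⟨n, rfl⟩ := Nat.exists_eq_add_of_le' hn
  obtain ⟨X, Z1, Z2, Z3, Z4, hX, h⟩ := Zqua_mul_Zun_mvPolynomial n
  have hf := fun i => MvPolynomial.eval₂_X (Int.castRingHom R) ![x, z1, z2, z3, z4] i
  simp only [← MvPolynomial.coe_eval₂Hom] at hf
  have e := congrArg (MvPolynomial.eval₂Hom (Int.castRingHom R) ![x, z1, z2, z3, z4]) h
  have e0 := hf 0
  have e1 := hf 1
  have e2 := hf 2
  have e3 := hf 3
  have e4 := hf 4
  rw [← hX] at e0 e1 e2 e3 e4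
  simp only [Matrix.cons_val] at e0 e1 e2 e3 e4
  simp only [Zun, Zadj, Zbaradj, map_mul, map_add, Zqua_map, map_one, e0, e1, e2, e3, e4] at e
  exact e
end
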